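/- Let K belong to the class R and contain exactly one singular vertex t. Then d(t) ≥ 8, i.e., lk(t,K) has at least 8 vertices. -/

import Mathlib

/-- An abstract simplicial complex on vertex set `ℕ`: a finite, downward closed
collection of nonempty finite sets of vertices. -/
structure SComplex where
  faces : Finset (Finset ℕ)
  not_empty_mem : ∅ ∉ faces
  down_closed : ∀ s ∈ faces, ∀ t ⊆ s, t ≠ ∅ → t ∈ faces

namespace SComplex

/-- The set of vertices of the complex. -/
def vertexSet (K : SComplex) : Finset ℕ := K.faces.sup id

/-- `fnum K i` is the number of `i`-dimensional faces of `K`. -/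
def fnum (K : SComplex) (i : ℕ) : ℕ := (K.faces.filter fun s => s.card = i + 1).card

/-- `g₂` for a 3-dimensional complex: `f₁ - 4 f₀ + 10`. -/
def g2 (K : SComplex) : ℤ := (K.fnum 1 : ℤ) - 4 * (K.fnum 0 : ℤ) + 10

/-- `g₂` for a 2-dimensional complex: `f₁ - 3 f₀ + 6`. -/
def g2surf (K : SComplex) : ℤ := (K.fnum 1 : ℤ) - 3 * (K.fnum 0 : ℤ) + 6

/-- Euler characteristic of a (2-dimensional) complex. -/
def euler (K : SComplex) : ℤ := (K.fnum 0 : ℤ) - (K.fnum 1 : ℤ) + (K.fnum 2 : ℤ)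

/-- The link of a face `σ`. -/
def lk (K : SComplex) (σ : Finset ℕ) : SComplex where
  faces := K.faces.filter fun γ => γ ∩ σ = ∅ ∧ γ ∪ σ ∈ K.faces
  not_empty_mem := fun h => K.not_empty_mem (Finset.mem_filter.mp h).1
  down_closed := by
    intro s hs t hts ht
    rw [Finset.mem_filter] at hs ⊢
    refine ⟨K.down_closed s hs.1 t hts ht, ?_, ?_⟩
    · have h1 : t ∩ σ ⊆ s ∩ σ := Finset.inter_subset_inter hts (Finset.Subset.refl σ)
      rw [hs.2.1] at h1
      exact Finset.subset_empty.mp h1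
    · refine K.down_closed (s ∪ σ) hs.2.2 (t ∪ σ)
        (Finset.union_subset_union hts (Finset.Subset.refl σ)) ?_
      intro hc
      exact ht (Finset.union_eq_empty.mp hc).1

/-- The (closed) star of a face `σ`. -/
def st (K : SComplex) (σ : Finset ℕ) : SComplex where
  faces := K.faces.filter fun α => α ∪ σ ∈ K.faces
  not_empty_mem := fun h => K.not_empty_mem (Finset.mem_filter.mp h).1
  down_closed := by
    intro s hs t hts ht
    rw [Finset.mem_filter] at hs ⊢
    refine ⟨K.down_closed s hs.1 t hts ht, ?_⟩
    refine K.down_closed (s ∪ σ) hs.2 (t ∪ σ)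
      (Finset.union_subset_union hts (Finset.Subset.refl σ)) ?_
    intro hc
    exact ht (Finset.union_eq_empty.mp hc).1

/-- A facet is a maximal face. -/
def IsFacet (K : SComplex) (s : Finset ℕ) : Prop :=
  s ∈ K.faces ∧ ∀ t ∈ K.faces, s ⊆ t → s = t

/-- A pure `d`-dimensional complex: all facets have `d+1` vertices. -/
def IsPure (K : SComplex) (d : ℕ) : Prop :=
  K.faces.Nonempty ∧ ∀ s, K.IsFacet s → s.card = d + 1

/-- Two facets are adjacent if they share a codimension-one face. -/
def FacetAdj (K : SComplex) (s t : Finset ℕ) : Prop :=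
  K.IsFacet s ∧ K.IsFacet t ∧ (s ∩ t).card + 1 = s.card

/-- Strong connectedness: any two facets are joined by a chain of facets, consecutive
ones sharing a codimension-one face. -/
def StronglyConnected (K : SComplex) : Prop :=
  ∀ s t, K.IsFacet s → K.IsFacet t → Relation.ReflTransGen K.FacetAdj s t

/-- Two vertices are adjacent if they span an edge. -/
def VertAdj (K : SComplex) (u v : ℕ) : Prop := ({u, v} : Finset ℕ) ∈ K.faces

/-- Connectedness of a complex (via its 1-skeleton). -/
def Conn (K : SComplex) : Prop :=
  K.faces.Nonempty ∧
    ∀ u v, {u} ∈ K.faces → {v} ∈ K.faces → Relation.ReflTransGen K.VertAdj u v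

/-- A normal `d`-pseudomanifold: pure, strongly connected, every `(d-1)`-face is in
exactly two facets, and links of faces of dimension at most `d-2` are connected. -/
def IsNormalPseudomanifold (K : SComplex) (d : ℕ) : Prop :=
  K.IsPure d ∧ K.StronglyConnected ∧
    (∀ s ∈ K.faces, s.card = d →
      (K.faces.filter fun F => F.card = d + 1 ∧ s ⊆ F).card = 2) ∧
    (∀ s ∈ K.faces, s.card ≤ d - 1 → (K.lk s).Conn)

/-- The geometric realization `|K|`, as a subspace of `ℕ → ℝ`. -/
def realSpace (K : SComplex) : Set (ℕ → ℝ) :=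
  {w | (∀ v, 0 ≤ w v) ∧ ∃ s ∈ K.faces, (∀ v, w v ≠ 0 → v ∈ s) ∧ ∑ v ∈ s, w v = 1}

/-- The link of the vertex `v` triangulates the `(d-1)`-sphere. -/
def HasSphereLink (K : SComplex) (d : ℕ) (v : ℕ) : Prop :=
  Nonempty (↥((K.lk {v}).realSpace) ≃ₜ
    ↥(Metric.sphere (0 : EuclideanSpace ℝ (Fin d)) 1))

/-- A singular vertex of a normal 3-pseudomanifold: its link is not a 2-sphere. -/
def IsSingular (K : SComplex) (v : ℕ) : Prop :=
  {v} ∈ K.faces ∧ ¬ K.HasSphereLink 3 v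

/-- `d(σ)`: the number of vertices of the link of `σ`. -/
def deg (K : SComplex) (σ : Finset ℕ) : ℕ := (K.lk σ).fnum 0

/-- The boundary complex of the simplex on vertex set `s`: all nonempty proper subsets. -/
def properFaces (s : Finset ℕ) : Finset (Finset ℕ) :=
  s.powerset.filter fun t => t ≠ ∅ ∧ t ≠ s

/-- All nonempty faces of the simplex on vertex set `s`. -/
def simplexFaces (s : Finset ℕ) : Finset (Finset ℕ) :=
  s.powerset.filter fun t => t ≠ ∅

/-- Operation (A): a bistellar 2-move on an edge `uv` with `lk(uv) = ∂(abc)`, `abc ∉ K`. -/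
def BistellarTwoMove (K K' : SComplex) : Prop :=
  ∃ u v a b c : ℕ,
    ({u, v} : Finset ℕ) ∈ K.faces ∧ u ≠ v ∧
    ({a, b, c} : Finset ℕ).card = 3 ∧
    u ∉ ({a, b, c} : Finset ℕ) ∧ v ∉ ({a, b, c} : Finset ℕ) ∧
    (K.lk {u, v}).faces = properFaces {a, b, c} ∧
    ({a, b, c} : Finset ℕ) ∉ K.faces ∧
    K'.faces = ((K.faces.filter fun α => ¬ ({u, v} : Finset ℕ) ⊆ α) ∪
      simplexFaces (insert u {a, b, c})) ∪ simplexFaces (insert v {a, b, c})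

/-- The faces of the boundary complex of a pure `d`-dimensional complex with face set `F`:
faces contained in some `(d-1)`-face lying in exactly one facet. -/
def bdryFaces (F : Finset (Finset ℕ)) (d : ℕ) : Finset (Finset ℕ) :=
  F.filter fun s => ∃ r ∈ F, s ⊆ r ∧ r.card = d ∧
    (F.filter fun t => t.card = d + 1 ∧ r ⊆ t).card = 1

/-- The faces of the cone with apex `w` over the complex with face set `F`. -/
def coneFaces (w : ℕ) (F : Finset (Finset ℕ)) : Finset (Finset ℕ) :=
  (F ∪ F.image (insert w)) ∪ {{w}}

/-- `K₁` is obtained from the normal `d`-pseudomanifold `K` by contracting the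
edge `uv` (satisfying the link condition): delete all faces containing `u` or `v`
and cone off the boundary of the result with a new vertex `w`. -/
def EdgeContractionAt (d : ℕ) (K : SComplex) (u v : ℕ) (K₁ : SComplex) : Prop :=
  ({u, v} : Finset ℕ) ∈ K.faces ∧ u ≠ v ∧
  (K.lk {u}).faces ∩ (K.lk {v}).faces = (K.lk {u, v}).faces ∧
  ∃ w, w ∉ K.vertexSet ∧
    K₁.faces = (K.faces.filter fun α => u ∉ α ∧ v ∉ α) ∪
      coneFaces w (bdryFaces (K.faces.filter fun α => u ∉ α ∧ v ∉ α) d)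

/-- Operation (B): an edge contraction in a 3-dimensional complex. -/
def EdgeContraction (K K₁ : SComplex) : Prop := ∃ u v, EdgeContractionAt 3 K u v K₁

/-- The class `R`: normal 3-pseudomanifolds with one or two singular vertices such that
(i) if `K` contains the boundary of a 3-simplex then it contains the 3-simplex and
(ii) no normal 3-pseudomanifold with smaller `g₂` is obtained from `K` by a
bistellar 2-move, an edge contraction, an edge expansion followed by a bistellar
2-move, or an edge expansion followed by an edge contraction. -/
def InClassR (K : SComplex) : Prop :=
  K.IsNormalPseudomanifold 3 ∧
  1 ≤ {v | K.IsSingular v}.ncard ∧ {v | K.IsSingular v}.ncard ≤ 2 ∧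
  (∀ s : Finset ℕ, s.card = 4 → (∀ t ∈ properFaces s, t ∈ K.faces) → s ∈ K.faces) ∧
  (∀ K' : SComplex, K'.IsNormalPseudomanifold 3 →
    (BistellarTwoMove K K' ∨ EdgeContraction K K' ∨
      (∃ M, EdgeContraction M K ∧ BistellarTwoMove M K') ∨
      (∃ M, EdgeContraction M K ∧ EdgeContraction M K')) →
    K.g2 ≤ K'.g2)



section

/-- Adjacency in the link of `σ`. -/
def LAdj (K : SComplex) (σ : Finset ℕ) (x y : ℕ) : Prop :=
  x ∉ σ ∧ y ∉ σ ∧ insert x (insert y σ) ∈ K.faces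

theorem LAdj.symm {K : SComplex} {σ : Finset ℕ} {x y : ℕ} (h : LAdj K σ x y) :
    LAdj K σ y x := ⟨h.2.1, h.1, by rw [Finset.insert_comm]; exact h.2.2⟩

theorem rtg_mono {α : Type*} {r p : α → α → Prop} {a b : α} (h : Relation.ReflTransGen r a b)
    (hrp : ∀ a b, r a b → p a b) : Relation.ReflTransGen p a b := by
  induction h with
  | refl => exact .refl
  | tail _ h ih => exact ih.tail (hrp _ _ h)

theorem mono {K : SComplex} {s u : Finset ℕ} (hs : s ∈ K.faces) (hu : u ⊆ s)
    (hne : u.Nonempty) : u ∈ K.faces := K.down_closed s hs u hu hne.ne_empty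

/-- Working version of normal 3-pseudomanifolds. -/
structure NP (K : SComplex) : Prop where
  ne : K.faces.Nonempty
  ext : ∀ s ∈ K.faces, ∃ F ∈ K.faces, s ⊆ F ∧ F.card = 4
  le : ∀ s ∈ K.faces, s.card ≤ 4
  two : ∀ s ∈ K.faces, s.card = 3 → ∃ x y, x ≠ y ∧ x ∉ s ∧ y ∉ s ∧
    ∀ z, z ∉ s → (insert z s ∈ K.faces ↔ z = x ∨ z = y)
  lconn : ∀ s, (s = ∅ ∨ s ∈ K.faces) → s.card ≤ 2 → ∀ x y, x ∉ s → y ∉ s →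
    insert x s ∈ K.faces → insert y s ∈ K.faces → Relation.ReflTransGen (LAdj K s) x y

theorem eq_insert_of_card {s F : Finset ℕ} (h : s ⊆ F) (hc : F.card = s.card + 1) :
    ∃ x, x ∉ s ∧ F = insert x s := by
  have h1 : (F \ s).card = 1 := by rw [Finset.card_sdiff_of_subset h]; omega
  obtain ⟨x, hx⟩ := Finset.card_eq_one.mp h1
  have hx' : x ∈ F \ s := by rw [hx]; simp
  refine ⟨x, (Finset.mem_sdiff.mp hx').2, ?_⟩
  rw [← Finset.sdiff_union_of_subset h, hx]; rfl

theorem vertAdj_lk {K : SComplex} {s : Finset ℕ} {x y : ℕ} :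
    (K.lk s).VertAdj x y ↔ LAdj K s x y := by
  unfold VertAdj LAdj lk
  simp only [Finset.mem_filter]
  have e : ({x, y} : Finset ℕ) ∪ s = insert x (insert y s) := by ext; simp
  rw [e]
  constructor
  · rintro ⟨h1, h2, h3⟩
    rw [← Finset.disjoint_iff_inter_eq_empty] at h2
    exact ⟨Finset.disjoint_left.mp h2 (by simp), Finset.disjoint_left.mp h2 (by simp), h3⟩
  · rintro ⟨h1, h2, h3⟩
    refine ⟨mono h3 ?_ (by simp), ?_, h3⟩
    · intro a; simp; tauto
    · ext a; simp; rintro (rfl | rfl) <;> assumption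

theorem vert_lk {K : SComplex} {s : Finset ℕ} {x : ℕ} :
    {x} ∈ (K.lk s).faces ↔ x ∉ s ∧ insert x s ∈ K.faces := by
  have := @vertAdj_lk K s x x
  unfold VertAdj LAdj at this
  simp only [Finset.insert_idem] at this
  have e : ({x, x} : Finset ℕ) = {x} := by simp
  rw [e] at this
  rw [this]; tauto

theorem NP.of {K : SComplex} (h : K.IsNormalPseudomanifold 3) : NP K := by
  obtain ⟨⟨hne, hp⟩, hs, h2, hl⟩ := h
  have hext : ∀ s ∈ K.faces, ∃ F, K.IsFacet F ∧ s ⊆ F ∧ F.card = 4 := by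
    intro s hs
    obtain ⟨F, hF, hm⟩ := Finset.exists_le_maximal K.faces hs
    have hf : K.IsFacet F := ⟨hm.1, fun t ht hst => le_antisymm hst (hm.2 ht hst)⟩
    exact ⟨F, hf, hF, hp F hf⟩
  refine ⟨hne, ?_, ?_, ?_, ?_⟩
  · intro s hs
    obtain ⟨F, hF, h⟩ := hext s hs
    exact ⟨F, hF.1, h⟩
  · intro s hs
    obtain ⟨F, hF, h, h'⟩ := hext s hs
    exact h' ▸ Finset.card_le_card h
  · intro s hs hc
    obtain ⟨F, G, hFG, e⟩ := Finset.card_eq_two.mp (h2 s hs hc)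
    have hF : F ∈ K.faces.filter fun F => F.card = 3 + 1 ∧ s ⊆ F := by rw [e]; simp
    have hG : G ∈ K.faces.filter fun F => F.card = 3 + 1 ∧ s ⊆ F := by rw [e]; simp
    rw [Finset.mem_filter] at hF hG
    obtain ⟨x, hx, rfl⟩ := eq_insert_of_card hF.2.2 (by omega)
    obtain ⟨y, hy, rfl⟩ := eq_insert_of_card hG.2.2 (by omega)
    refine ⟨x, y, ?_, hx, hy, ?_⟩
    · rintro rfl; exact hFG rfl
    · intro z hz
      constructor
      · intro hzK
        have : insert z s ∈ K.faces.filter fun F => F.card = 3 + 1 ∧ s ⊆ F := by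
          rw [Finset.mem_filter]
          exact ⟨hzK, by rw [Finset.card_insert_of_notMem hz, hc], Finset.subset_insert _ _⟩
        rw [e] at this
        simp only [Finset.mem_insert, Finset.mem_singleton] at this
        rcases this with h | h
        · left
          have : z ∈ insert x s := by rw [← h]; simp
          simpa [hz] using this
        · right
          have : z ∈ insert y s := by rw [← h]; simp
          simpa [hz] using this
      · rintro (rfl | rfl)
        · exact hF.1
        · exact hG.1
  · rintro s (rfl | hs') hc x y hx hy hxs hys
    · obtain ⟨F, hF, hxF, -⟩ := hext _ hxs
      obtain ⟨G, hG, hyG, -⟩ := hext _ hys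
      have hxF' : x ∈ F := hxF (by simp)
      have hyG' : y ∈ G := hyG (by simp)
      have key : ∀ G, Relation.ReflTransGen K.FacetAdj F G → G ∈ K.faces ∧ ∀ y ∈ G,
          Relation.ReflTransGen (LAdj K ∅) x y := by
        intro G hG
        have adj : ∀ H ∈ K.faces, ∀ a ∈ H, ∀ b ∈ H, LAdj K ∅ a b := by
          intro H hH a ha b hb
          refine ⟨by simp, by simp, mono hH ?_ (by simp)⟩
          intro c; simp; rintro (rfl | rfl) <;> assumption
        induction hG with
        | refl => exact ⟨hF.1, fun y hy => .single (adj F hF.1 x hxF' y hy)⟩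
        | tail _ h ih =>
          rename_i B C _
          refine ⟨h.2.1.1, fun y hy => ?_⟩
          have : (B ∩ C).Nonempty := by
            rw [← Finset.card_pos]
            have := hp B h.1
            have := h.2.2
            omega
          obtain ⟨z, hz⟩ := this
          rw [Finset.mem_inter] at hz
          exact (ih.2 z hz.1).tail (adj C h.2.1.1 z hz.2 y hy)
      exact (key G (hs F G hF hG)).2 y hyG'
    · have := (hl s hs' hc).2 x y (vert_lk.mpr ⟨hx, hxs⟩) (vert_lk.mpr ⟨hy, hys⟩)
      exact rtg_mono this fun a b h => vertAdj_lk.mp h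

/-- Adjacent facets in the star of `σ`. -/
def SAdj (K : SComplex) (σ F G : Finset ℕ) : Prop :=
  F ∈ K.faces ∧ G ∈ K.faces ∧ F.card = 4 ∧ G.card = 4 ∧ σ ⊆ F ∧ σ ⊆ G ∧ (F ∩ G).card = 3

theorem star_step {K : SComplex} (h : NP K) (σ : Finset ℕ) (hσ : σ = ∅ ∨ σ ∈ K.faces)
    (hc : σ.card ≤ 2)
    (hrec : ∀ x, x ∉ σ → insert x σ ∈ K.faces → ∀ F G, F ∈ K.faces → G ∈ K.faces →
      F.card = 4 → G.card = 4 → insert x σ ⊆ F → insert x σ ⊆ G →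
      Relation.ReflTransGen (SAdj K (insert x σ)) F G)
    (F G : Finset ℕ) (hF : F ∈ K.faces) (hG : G ∈ K.faces) (cF : F.card = 4) (cG : G.card = 4)
    (sF : σ ⊆ F) (sG : σ ⊆ G) : Relation.ReflTransGen (SAdj K σ) F G := by
  have hm : ∀ x A B, SAdj K (insert x σ) A B → SAdj K σ A B := by
    rintro x A B ⟨h1, h2, h3, h4, h5, h6, h7⟩
    exact ⟨h1, h2, h3, h4, (Finset.subset_insert _ _).trans h5,
      (Finset.subset_insert _ _).trans h6, h7⟩
  obtain ⟨x, hxF, hx⟩ : ∃ x ∈ F, x ∉ σ := Finset.exists_mem_notMem_of_card_lt_card (by omega)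
  obtain ⟨y, hyG, hy⟩ : ∃ y ∈ G, y ∉ σ := Finset.exists_mem_notMem_of_card_lt_card (by omega)
  have hxs : insert x σ ⊆ F := Finset.insert_subset hxF sF
  have hys : insert y σ ⊆ G := Finset.insert_subset hyG sG
  have hxK : insert x σ ∈ K.faces := mono hF hxs (by simp)
  have hyK : insert y σ ∈ K.faces := mono hG hys (by simp)
  have path := h.lconn σ hσ hc x y hx hy hxK hyK
  have key : ∀ z, Relation.ReflTransGen (LAdj K σ) x z → ∀ H ∈ K.faces, H.card = 4 →
      insert z σ ⊆ H → Relation.ReflTransGen (SAdj K σ) F H := by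
    intro z hz
    induction hz with
    | refl =>
      intro H hH cH sH
      exact rtg_mono (hrec x hx hxK F H hF hH cF cH hxs sH) (hm x)
    | tail _ hab ih =>
      rename_i a b _
      intro H hH cH sH
      obtain ⟨M, hM, sM, cM⟩ := h.ext _ hab.2.2
      have s1 : insert a σ ⊆ M := fun c hc => sM (by simp at hc ⊢; tauto)
      have s2 : insert b σ ⊆ M := fun c hc => sM (by simp at hc ⊢; tauto)
      exact (ih M hM cM s1).trans (rtg_mono
        (hrec b hab.2.1 (mono hH sH (by simp)) M H hM hH cM cH s2 sH) (hm b))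
  exact key y path G hG cG hys

theorem star3 {K : SComplex} (σ : Finset ℕ) (hc : σ.card = 3)
    (F G : Finset ℕ) (hF : F ∈ K.faces) (hG : G ∈ K.faces) (cF : F.card = 4) (cG : G.card = 4)
    (sF : σ ⊆ F) (sG : σ ⊆ G) : Relation.ReflTransGen (SAdj K σ) F G := by
  by_cases e : F = G
  · rw [e]
  · refine .single ⟨hF, hG, cF, cG, sF, sG, ?_⟩
    have h1 : σ.card ≤ (F ∩ G).card := Finset.card_le_card (Finset.subset_inter sF sG)
    have h2 : (F ∩ G).card < 4 := by
      rw [← cF]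
      apply Finset.card_lt_card
      refine ⟨Finset.inter_subset_left, fun h => e ?_⟩
      exact Finset.eq_of_subset_of_card_le (h.trans Finset.inter_subset_right) (by omega)
    omega

theorem NP.star {K : SComplex} (h : NP K) (σ : Finset ℕ) (hσ : σ = ∅ ∨ σ ∈ K.faces)
    (hc : σ.card ≤ 3)
    (F G : Finset ℕ) (hF : F ∈ K.faces) (hG : G ∈ K.faces) (cF : F.card = 4) (cG : G.card = 4)
    (sF : σ ⊆ F) (sG : σ ⊆ G) : Relation.ReflTransGen (SAdj K σ) F G := by
  obtain ⟨n, hn⟩ : ∃ n, n = 3 - σ.card := ⟨_, rfl⟩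
  induction n generalizing σ F G with
  | zero => exact star3 σ (by omega) F G hF hG cF cG sF sG
  | succ n ih =>
    refine star_step h σ hσ (by omega) ?_ F G hF hG cF cG sF sG
    intro x hx hxK F G hF hG cF cG sF sG
    have := Finset.card_insert_of_notMem hx
    exact ih (insert x σ) (Or.inr hxK) (by omega) F G hF hG cF cG sF sG (by omega)

theorem NP.to {K : SComplex} (h : NP K) : K.IsNormalPseudomanifold 3 := by
  have hp : ∀ s, K.IsFacet s → s.card = 4 := by
    intro s hs
    obtain ⟨F, hF, hsF, hc⟩ := h.ext s hs.1
    rw [hs.2 F hF hsF, hc]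
  have hf : ∀ s ∈ K.faces, s.card = 4 → K.IsFacet s := by
    intro s hs hc
    refine ⟨hs, fun t ht hst => Finset.eq_of_subset_of_card_le hst ?_⟩
    rw [hc]; exact h.le t ht
  refine ⟨⟨h.ne, hp⟩, ?_, ?_, ?_⟩
  · intro s t hs ht
    refine rtg_mono (h.star ∅ (Or.inl rfl) (by simp) s t hs.1 ht.1 (hp s hs) (hp t ht)
      (by simp) (by simp)) ?_
    rintro a b ⟨h1, h2, h3, h4, h5, h6, h7⟩
    exact ⟨hf a h1 h3, hf b h2 h4, by omega⟩
  · intro s hs hc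
    obtain ⟨x, y, hxy, hx, hy, hz⟩ := h.two s hs hc
    have : (K.faces.filter fun F => F.card = 3 + 1 ∧ s ⊆ F) = {insert x s, insert y s} := by
      ext F
      simp only [Finset.mem_filter, Finset.mem_insert, Finset.mem_singleton]
      constructor
      · rintro ⟨h1, h2, h3⟩
        obtain ⟨z, hzs, rfl⟩ := eq_insert_of_card h3 (by omega)
        rcases (hz z hzs).mp h1 with rfl | rfl <;> simp
      · rintro (rfl | rfl)
        · exact ⟨(hz x hx).mpr (Or.inl rfl), by rw [Finset.card_insert_of_notMem hx, hc],
            Finset.subset_insert _ _⟩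
        · exact ⟨(hz y hy).mpr (Or.inr rfl), by rw [Finset.card_insert_of_notMem hy, hc],
            Finset.subset_insert _ _⟩
    rw [this, Finset.card_pair]
    intro e
    have : x ∈ insert y s := by rw [← e]; simp
    simp [hx, hxy] at this
  · intro s hs hc
    obtain ⟨F, hF, hsF, cF⟩ := h.ext s hs
    obtain ⟨x, hxF, hx⟩ : ∃ x ∈ F, x ∉ s := Finset.exists_mem_notMem_of_card_lt_card (by omega)
    refine ⟨⟨{x}, vert_lk.mpr ⟨hx, mono hF (Finset.insert_subset hxF hsF) (by simp)⟩⟩, ?_⟩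
    intro u v hu hv
    rw [vert_lk] at hu hv
    exact rtg_mono (h.lconn s (Or.inr hs) hc u v hu.1 hv.1 hu.2 hv.2) fun a b h => vertAdj_lk.mpr h


end
section

theorem rtg_lift {r p : ℕ → ℕ → Prop} {a b : ℕ} (f : ℕ → ℕ)
    (hrp : ∀ a b, r a b → p (f a) (f b)) (h : Relation.ReflTransGen r a b) :
    Relation.ReflTransGen p (f a) (f b) := by
  induction h with
  | refl => exact .refl
  | tail _ h ih => exact ih.tail (hrp _ _ h)

theorem reroute {R R' : ℕ → ℕ → Prop} {r x y : ℕ}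
    (h1 : ∀ x y, x ≠ r → y ≠ r → R x y → R' x y)
    (h2 : ∀ a b, R a r → R r b → a ≠ r → b ≠ r → Relation.ReflTransGen R' a b)
    (h : Relation.ReflTransGen R x y) (hx : x ≠ r) (hy : y ≠ r) :
    Relation.ReflTransGen R' x y := by
  have key : ∀ z, Relation.ReflTransGen R x z →
      (z ≠ r → Relation.ReflTransGen R' x z) ∧
      (z = r → ∀ b, R r b → b ≠ r → Relation.ReflTransGen R' x b) := by
    intro z hz
    induction hz with
    | refl => exact ⟨fun _ => .refl, fun h => absurd h hx⟩
    | tail _ hab ih =>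
      rename_i a b _
      constructor
      · intro hb
        by_cases ha : a = r
        · subst ha; exact ih.2 rfl b hab hb
        · exact (ih.1 ha).tail (h1 a b ha hb hab)
      · rintro rfl c hc hcb
        by_cases ha : a = b
        · subst ha; exact ih.2 rfl c hc hcb
        · exact (ih.1 ha).trans (h2 a c hab hc ha hcb)
  exact (key y h).1 hy

theorem parity {K : SComplex} (h : NP K) {σ : Finset ℕ} (hσ : σ.card = 2) {v p q : ℕ}
    (hpv : LAdj K σ p v) (hvq : LAdj K σ v q) (hp : p ≠ v) (hq : q ≠ v) :
    Relation.ReflTransGen (fun x y => LAdj K σ x y ∧ x ≠ v ∧ y ≠ v) p q := by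
  classical
  by_contra hcon
  set R := fun x y => LAdj K σ x y ∧ x ≠ v ∧ y ≠ v with hR
  have hpq : p ≠ q := by rintro rfl; exact hcon .refl
  -- neighbours
  have nb : ∀ x, x ∉ σ → insert x σ ∈ K.faces → ∃ a b, a ≠ b ∧ a ≠ x ∧ b ≠ x ∧
      ∀ z, (z ≠ x ∧ LAdj K σ x z) ↔ (z = a ∨ z = b) := by
    intro x hx hxK
    obtain ⟨a, b, hab, ha, hb, hz⟩ := h.two _ hxK (by rw [Finset.card_insert_of_notMem hx, hσ])
    simp only [Finset.mem_insert, not_or] at ha hb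
    refine ⟨a, b, hab, ha.1, hb.1, fun z => ?_⟩
    constructor
    · rintro ⟨h1, h2, h3, h4⟩
      refine (hz z (by simp [h1, h3])).mp ?_
      rw [Finset.insert_comm]; exact h4
    · intro hzab
      have hzm : z ∉ insert x σ := by
        rcases hzab with rfl | rfl <;> simp [ha, hb]
      have := (hz z hzm).mpr hzab
      simp only [Finset.mem_insert, not_or] at hzm
      exact ⟨hzm.1, hx, hzm.2, by rw [Finset.insert_comm]; exact this⟩
  have hvK : insert v σ ∈ K.faces := mono hpv.2.2 (by simp) (by simp)
  obtain ⟨a0, b0, hab0, -, -, hz0⟩ := nb v hpv.2.1 hvK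
  have hvn : ∀ z, z ≠ v → LAdj K σ v z → z = p ∨ z = q := by
    intro z hz hvz
    have e1 := (hz0 z).mp ⟨hz, hvz⟩
    have e2 := (hz0 p).mp ⟨hp, hpv.symm⟩
    have e3 := (hz0 q).mp ⟨hq, hvq⟩
    omega
  have reach : ∀ x, Relation.ReflTransGen R p x → x ∉ σ ∧ x ≠ v ∧ insert x σ ∈ K.faces := by
    intro x hx
    induction hx with
    | refl => exact ⟨hpv.1, hp, mono hpv.2.2 (by intro c; simp; tauto) (by simp)⟩
    | tail _ hab _ =>
      refine ⟨hab.1.2.1, hab.2.2, mono hab.1.2.2 (by simp) (by simp)⟩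
  set S := (K.faces.sup id).filter (fun x => Relation.ReflTransGen R p x) with hS
  have memS : ∀ x, x ∈ S ↔ Relation.ReflTransGen R p x := by
    intro x
    rw [hS, Finset.mem_filter]
    refine ⟨fun h => h.2, fun h => ⟨?_, h⟩⟩
    rw [Finset.mem_sup]
    exact ⟨_, (reach x h).2.2, by simp⟩
  let G : SimpleGraph S :=
    { Adj := fun x y => x ≠ y ∧ LAdj K σ x y
      symm := ⟨fun x y h => ⟨h.1.symm, h.2.symm⟩⟩
      loopless := ⟨fun x h => h.1 rfl⟩ }
  have deg : ∀ x : S, G.degree x = (S.filter (fun y : ℕ => y ≠ (x : ℕ) ∧ LAdj K σ x y)).card := by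
    intro x
    rw [← SimpleGraph.card_neighborFinset_eq_degree]
    refine Finset.card_bij (fun y _ => (y : ℕ)) ?_ ?_ ?_
    · intro y hy
      rw [SimpleGraph.mem_neighborFinset] at hy
      rw [Finset.mem_filter]
      exact ⟨y.2, fun e => hy.1 (Subtype.ext e.symm), hy.2⟩
    · intro a _ b _ e; exact Subtype.ext e
    · intro y hy
      rw [Finset.mem_filter] at hy
      refine ⟨⟨y, hy.1⟩, ?_, rfl⟩
      rw [SimpleGraph.mem_neighborFinset]
      exact ⟨fun e => hy.2.1 (by rw [e]), hy.2.2⟩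
  have hpS : p ∈ S := (memS p).mpr .refl
  have hqS : q ∉ S := fun h => hcon ((memS q).mp h)
  have hvS : v ∉ S := fun h => (reach v ((memS v).mp h)).2.1 rfl
  have odd : ∀ x : S, Odd (G.degree x) ↔ x = ⟨p, hpS⟩ := by
    intro x
    rw [deg]
    have hx := reach x ((memS x).mp x.2)
    obtain ⟨a, b, hab, hax, hbx, hz⟩ := nb x hx.1 hx.2.2
    have inS : ∀ z, z ≠ v → z ≠ x → LAdj K σ x z → z ∈ S := by
      intro z hzv hzx hl
      exact (memS z).mpr (((memS x).mp x.2).tail ⟨hl, hx.2.1, hzv⟩)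
    by_cases e : x = ⟨p, hpS⟩
    · simp only [e, iff_true]
      subst e
      have hv := (hz v).mp ⟨hp.symm, hpv⟩
      have : ∃ c, (S.filter (fun y => y ≠ p ∧ LAdj K σ p y)) = {c} := by
        rcases hv with rfl | rfl
        · refine ⟨b, ?_⟩
          ext y
          rw [Finset.mem_filter, Finset.mem_singleton, hz]
          constructor
          · rintro ⟨h1, rfl | h2⟩
            · exact absurd h1 hvS
            · exact h2
          · rintro rfl
            have := (hz y).mpr (Or.inr rfl)
            exact ⟨inS y hab.symm this.1 this.2, Or.inr rfl⟩
        · refine ⟨a, ?_⟩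
          ext y
          rw [Finset.mem_filter, Finset.mem_singleton, hz]
          constructor
          · rintro ⟨h1, h2 | rfl⟩
            · exact h2
            · exact absurd h1 hvS
          · rintro rfl
            have := (hz y).mpr (Or.inl rfl)
            exact ⟨inS y hab this.1 this.2, Or.inl rfl⟩
      obtain ⟨c, hc⟩ := this
      rw [hc]; simp
    · simp only [e, iff_false]
      have hxp : (x : ℕ) ≠ p := fun e' => e (Subtype.ext e')
      have hxq : (x : ℕ) ≠ q := fun e' => hqS (e' ▸ x.2)
      have hv : ∀ z : ℕ, z ≠ (x : ℕ) → LAdj K σ x z → z ≠ v := by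
        intro z hzx hl e'
        rw [e'] at hl
        rcases hvn x hx.2.1 hl.symm with h | h
        · exact hxp h
        · exact hxq h
      have : (S.filter (fun y : ℕ => y ≠ (x : ℕ) ∧ LAdj K σ x y)) = {a, b} := by
        ext y
        rw [Finset.mem_filter, Finset.mem_insert, Finset.mem_singleton, hz]
        refine ⟨fun h => h.2, fun h => ⟨?_, h⟩⟩
        have := (hz y).mpr h
        exact inS y (hv y this.1 this.2) this.1 this.2
      rw [this, Finset.card_pair hab]
      decide
  have ev := G.even_card_odd_degree_vertices
  have : (Finset.univ.filter fun x : S => Odd (G.degree x)) = {⟨p, hpS⟩} := by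
    ext x; simp only [Finset.mem_filter, Finset.mem_univ, true_and, Finset.mem_singleton]
    exact odd x
  rw [this] at ev
  simp at ev

/-- The map identifying `t` and `v` to `w`. -/
def phi (t v w x : ℕ) : ℕ := if x = t ∨ x = v then w else x

/-- The contracted complex. -/
def con (K : SComplex) (t v w : ℕ) : SComplex where
  faces := K.faces.image (fun s => s.image (phi t v w))
  not_empty_mem := by
    intro h
    obtain ⟨s, hs, e⟩ := Finset.mem_image.mp h
    rw [Finset.image_eq_empty] at e
    exact K.not_empty_mem (e ▸ hs)
  down_closed := by
    intro s hs u hu hne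
    obtain ⟨s0, hs0, rfl⟩ := Finset.mem_image.mp hs
    obtain ⟨u0, hu0, rfl⟩ := Finset.subset_image_iff.mp hu
    refine Finset.mem_image.mpr ⟨u0, K.down_closed s0 hs0 u0 (by exact_mod_cast hu0) ?_, rfl⟩
    rintro rfl; simp at hne

structure Ctr (K : SComplex) (t v w : ℕ) : Prop where
  np : NP K
  htv : t ≠ v
  fresh : ∀ s ∈ K.faces, w ∉ s
  edge : {t, v} ∈ K.faces
  lc : ∀ γ, t ∉ γ → v ∉ γ → insert t γ ∈ K.faces → insert v γ ∈ K.faces →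
    insert t (insert v γ) ∈ K.faces

variable {K : SComplex} {t v w : ℕ}

theorem Ctr.symm (h : Ctr K t v w) : Ctr K v t w where
  np := h.np
  htv := h.htv.symm
  fresh := h.fresh
  edge := by rw [Finset.pair_comm]; exact h.edge
  lc := fun γ h1 h2 h3 h4 => by rw [Finset.insert_comm]; exact h.lc γ h2 h1 h4 h3

theorem phi_comm (t v w : ℕ) : phi t v w = phi v t w := by
  funext x; simp [phi, or_comm]

theorem con_comm (K : SComplex) (t v w : ℕ) : con K t v w = con K v t w := by
  simp [con, phi_comm t v w]

theorem Ctr.wt (h : Ctr K t v w) : w ≠ t := by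
  rintro rfl; exact h.fresh _ h.edge (by simp)

theorem Ctr.wv (h : Ctr K t v w) : w ≠ v := h.symm.wt

theorem phi_id {s : Finset ℕ} (ht : t ∉ s) (hv : v ∉ s) : s.image (phi t v w) = s := by
  rw [Finset.image_congr (g := id), Finset.image_id]
  intro x hx
  have h1 : x ≠ t := by rintro rfl; exact ht hx
  have h2 : x ≠ v := by rintro rfl; exact hv hx
  simp [phi, h1, h2]

theorem not_mem_phi (h : Ctr K t v w) (s : Finset ℕ) : t ∉ s.image (phi t v w) ∧
    v ∉ s.image (phi t v w) := by
  have := h.wt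
  have := h.wv
  constructor
  · intro hx
    obtain ⟨x, _, e⟩ := Finset.mem_image.mp hx
    unfold phi at e; split_ifs at e <;> grind
  · intro hx
    obtain ⟨x, _, e⟩ := Finset.mem_image.mp hx
    unfold phi at e; split_ifs at e <;> grind

theorem con_tv (h : Ctr K t v w) {s : Finset ℕ} (hs : s ∈ (con K t v w).faces) : t ∉ s ∧ v ∉ s := by
  obtain ⟨s0, _, rfl⟩ := Finset.mem_image.mp hs
  exact not_mem_phi h s0

theorem con_not (_ : Ctr K t v w) {s : Finset ℕ} (hw : w ∉ s) :
    s ∈ (con K t v w).faces ↔ t ∉ s ∧ v ∉ s ∧ s ∈ K.faces := by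
  constructor
  · intro hs
    obtain ⟨s0, h0, rfl⟩ := Finset.mem_image.mp hs
    have ht0 : t ∉ s0 := fun ht => hw (Finset.mem_image.mpr ⟨t, ht, by simp [phi]⟩)
    have hv0 : v ∉ s0 := fun ht => hw (Finset.mem_image.mpr ⟨v, ht, by simp [phi]⟩)
    rw [phi_id ht0 hv0]
    exact ⟨ht0, hv0, h0⟩
  · rintro ⟨h1, h2, h3⟩
    exact Finset.mem_image.mpr ⟨s, h3, phi_id h1 h2⟩

theorem con_w (h : Ctr K t v w) {γ : Finset ℕ} (hw : w ∉ γ) :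
    insert w γ ∈ (con K t v w).faces ↔
      t ∉ γ ∧ v ∉ γ ∧ (insert t γ ∈ K.faces ∨ insert v γ ∈ K.faces) := by
  constructor
  · intro hs
    have htv := con_tv h hs
    simp only [Finset.mem_insert, not_or] at htv
    obtain ⟨s0, h0, e⟩ := Finset.mem_image.mp hs
    refine ⟨htv.1.2, htv.2.2, ?_⟩
    have hsub : γ ⊆ s0 := by
      intro x hx
      have : x ∈ s0.image (phi t v w) := by rw [e]; simp [hx]
      obtain ⟨y, hy, ey⟩ := Finset.mem_image.mp this
      unfold phi at ey
      split_ifs at ey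
      · exact absurd (ey ▸ hx) hw
      · exact ey ▸ hy
    have : w ∈ s0.image (phi t v w) := by rw [e]; simp
    obtain ⟨y, hy, ey⟩ := Finset.mem_image.mp this
    unfold phi at ey
    split_ifs at ey with hc
    · rcases hc with rfl | rfl
      · left; exact mono h0 (Finset.insert_subset hy hsub) (by simp)
      · right; exact mono h0 (Finset.insert_subset hy hsub) (by simp)
    · exact absurd (ey ▸ hy) (h.fresh s0 h0)
  · rintro ⟨h1, h2, h3 | h3⟩
    · refine Finset.mem_image.mpr ⟨_, h3, ?_⟩
      rw [Finset.image_insert, phi_id h1 h2]; simp [phi]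
    · refine Finset.mem_image.mpr ⟨_, h3, ?_⟩
      rw [Finset.image_insert, phi_id h1 h2]; simp [phi]

theorem facet_avoid_aux (h : Ctr K t v w) {s : Finset ℕ} (hs : s ∈ K.faces) (hsv : v ∉ s) :
    ∃ F ∈ K.faces, s ⊆ F ∧ F.card = 4 ∧ ¬ (t ∈ F ∧ v ∈ F) := by
  obtain ⟨F, hF, hsF, cF⟩ := h.np.ext s hs
  by_cases hb : t ∈ F ∧ v ∈ F
  · have c3 : (F.erase v).card = 3 := by rw [Finset.card_erase_of_mem hb.2, cF]
    have hne : (F.erase v).Nonempty := by rw [← Finset.card_pos]; omega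
    obtain ⟨x, y, hxy, hx, hy, hz⟩ := h.np.two _ (mono hF (Finset.erase_subset _ _) hne) c3
    have hsub : s ⊆ F.erase v := Finset.subset_erase.mpr ⟨hsF, hsv⟩
    have : ∃ z, z ∉ F.erase v ∧ z ≠ v ∧ insert z (F.erase v) ∈ K.faces := by
      by_cases e : x = v
      · exact ⟨y, hy, by rw [← e]; exact hxy.symm, (hz y hy).mpr (Or.inr rfl)⟩
      · exact ⟨x, hx, e, (hz x hx).mpr (Or.inl rfl)⟩
    obtain ⟨z, hz1, hz2, hz3⟩ := this
    refine ⟨_, hz3, hsub.trans (Finset.subset_insert _ _), ?_, ?_⟩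
    · rw [Finset.card_insert_of_notMem hz1, c3]
    · simp [hz2.symm]
  · exact ⟨F, hF, hsF, cF, hb⟩

theorem facet_avoid (h : Ctr K t v w) {s : Finset ℕ} (hs : s ∈ K.faces) (hsv : ¬ (t ∈ s ∧ v ∈ s)) :
    ∃ F ∈ K.faces, s ⊆ F ∧ F.card = 4 ∧ ¬ (t ∈ F ∧ v ∈ F) := by
  by_cases hv : v ∈ s
  · have ht : t ∉ s := fun ht => hsv ⟨ht, hv⟩
    obtain ⟨F, h1, h2, h3, h4⟩ := facet_avoid_aux h.symm hs ht
    exact ⟨F, h1, h2, h3, fun h => h4 ⟨h.2, h.1⟩⟩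
  · exact facet_avoid_aux h hs hv

theorem no_both (h : Ctr K t v w) {γ : Finset ℕ} (ht : t ∉ γ) (hv : v ∉ γ) (hc : γ.card = 3)
    (h1 : insert t γ ∈ K.faces) (h2 : insert v γ ∈ K.faces) : False := by
  have := h.np.le _ (h.lc γ ht hv h1 h2)
  rw [Finset.card_insert_of_notMem (by simp [ht, h.htv]), Finset.card_insert_of_notMem hv] at this
  omega

theorem con_two_aux (h : Ctr K t v w) {γ : Finset ℕ} (hw : w ∉ γ) (ht : t ∉ γ) (hv : v ∉ γ)
    (hc : γ.card = 2) (h1 : insert t γ ∈ K.faces) (h2 : insert v γ ∉ K.faces) :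
    ∃ x y, x ≠ y ∧ x ∉ insert w γ ∧ y ∉ insert w γ ∧
    ∀ z, z ∉ insert w γ → (insert z (insert w γ) ∈ (con K t v w).faces ↔ z = x ∨ z = y) := by
  obtain ⟨x, y, hxy, hx, hy, hz⟩ := h.np.two _ h1 (by rw [Finset.card_insert_of_notMem ht, hc])
  have hxw : x ≠ w := by
    rintro rfl; exact h.fresh _ ((hz x hx).mpr (Or.inl rfl)) (by simp)
  have hyw : y ≠ w := by
    rintro rfl; exact h.fresh _ ((hz y hy).mpr (Or.inr rfl)) (by simp)
  have hxv : x ≠ v := by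
    rintro rfl
    exact h2 (mono ((hz x hx).mpr (Or.inl rfl)) (by intro c; simp; tauto) (by simp))
  have hyv : y ≠ v := by
    rintro rfl
    exact h2 (mono ((hz y hy).mpr (Or.inr rfl)) (by intro c; simp; tauto) (by simp))
  simp only [Finset.mem_insert, not_or] at hx hy
  refine ⟨x, y, hxy, by simp [hxw, hx], by simp [hyw, hy], fun z hzm => ?_⟩
  simp only [Finset.mem_insert, not_or] at hzm
  rw [Finset.insert_comm, con_w h (by simp [hw, Ne.symm hzm.1])]
  constructor
  · rintro ⟨h3, h4, h5 | h5⟩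
    · simp only [Finset.mem_insert, not_or] at h3
      refine (hz z (by simp [hzm, Ne.symm h3.1])).mp ?_
      rw [Finset.insert_comm]; exact h5
    · exact absurd (mono h5 (by intro c; simp; tauto) (by simp)) h2
  · intro hzz
    have hzt : z ∉ insert t γ := by
      rcases hzz with rfl | rfl <;> simp [hx, hy]
    have hzv : z ≠ v := by rcases hzz with rfl | rfl <;> assumption
    have := (hz z hzt).mpr hzz
    simp only [Finset.mem_insert, not_or] at hzt
    refine ⟨by simp [ht, Ne.symm hzt.1], by simp [hv, hzv.symm], Or.inl ?_⟩
    rw [Finset.insert_comm]; exact this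

/-- The other vertex over `insert t γ`. -/
theorem other (h : Ctr K t v w) {γ : Finset ℕ} (ht : t ∉ γ) (hv : v ∉ γ)
    (hc : γ.card = 2) (h1 : insert t γ ∈ K.faces) (h2 : insert t (insert v γ) ∈ K.faces) :
    ∃ c, c ∉ γ ∧ c ≠ t ∧ c ≠ v ∧ ∀ z, z ∉ γ → z ≠ t → z ≠ v →
      (insert t (insert z γ) ∈ K.faces ↔ z = c) := by
  obtain ⟨x, y, hxy, hx, hy, hz⟩ := h.np.two _ h1 (by rw [Finset.card_insert_of_notMem ht, hc])
  have hvm : v ∉ insert t γ := by simp [hv, h.htv.symm]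
  have hvv := (hz v hvm).mp (by rw [Finset.insert_comm]; exact h2)
  simp only [Finset.mem_insert, not_or] at hx hy
  rcases hvv with rfl | rfl
  · refine ⟨y, hy.2, hy.1, hxy.symm, fun z h3 h4 h5 => ?_⟩
    rw [Finset.insert_comm, hz z (by simp [h3, h4])]
    simp [h5]
  · refine ⟨x, hx.2, hx.1, hxy, fun z h3 h4 h5 => ?_⟩
    rw [Finset.insert_comm, hz z (by simp [h3, h4])]
    simp [h5]

theorem con_two (h : Ctr K t v w) (s : Finset ℕ) (hs : s ∈ (con K t v w).faces) (hc : s.card = 3) :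
    ∃ x y, x ≠ y ∧ x ∉ s ∧ y ∉ s ∧
    ∀ z, z ∉ s → (insert z s ∈ (con K t v w).faces ↔ z = x ∨ z = y) := by
  have hwt := h.wt
  have hwv := h.wv
  have htv := h.htv
  by_cases hw : w ∈ s
  · obtain ⟨γ, hwγ, rfl⟩ : ∃ γ, w ∉ γ ∧ s = insert w γ :=
      ⟨s.erase w, by simp, by rw [Finset.insert_erase hw]⟩
    rw [Finset.card_insert_of_notMem hwγ] at hc
    obtain ⟨ht, hv, h12⟩ := (con_w h hwγ).mp hs
    by_cases h1 : insert t γ ∈ K.faces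
    · by_cases h2 : insert v γ ∈ K.faces
      · have h3 := h.lc γ ht hv h1 h2
        obtain ⟨c, hc1, hc2, hc3, hc4⟩ := other h ht hv (by omega) h1 h3
        obtain ⟨d, hd1, hd3, hd2, hd4⟩ := other h.symm hv ht (by omega) h2
          (by rw [Finset.insert_comm]; exact h3)
        have kc := (hc4 c hc1 hc2 hc3).mpr rfl
        have kd := (hd4 d hd1 hd3 hd2).mpr rfl
        have hcw : c ≠ w := by rintro rfl; exact h.fresh _ kc (by simp)
        have hdw : d ≠ w := by rintro rfl; exact h.fresh _ kd (by simp)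
        refine ⟨c, d, ?_, by simp [hc1, hcw], by simp [hd1, hdw], fun z hz => ?_⟩
        · rintro rfl
          exact no_both h (γ := insert c γ) (by simp [ht, hc2.symm]) (by simp [hv, hc3.symm])
            (by rw [Finset.card_insert_of_notMem hc1]; omega) kc kd
        · simp only [Finset.mem_insert, not_or] at hz
          rw [Finset.insert_comm, con_w h (by simp [hwγ, Ne.symm hz.1])]
          simp only [Finset.mem_insert, not_or]
          constructor
          · rintro ⟨⟨h4, -⟩, ⟨h5, -⟩, h6 | h6⟩
            · exact Or.inl ((hc4 z hz.2 (Ne.symm h4) (Ne.symm h5)).mp h6)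
            · exact Or.inr ((hd4 z hz.2 (Ne.symm h5) (Ne.symm h4)).mp h6)
          · rintro (rfl | rfl)
            · exact ⟨⟨hc2.symm, ht⟩, ⟨hc3.symm, hv⟩, Or.inl kc⟩
            · exact ⟨⟨hd2.symm, ht⟩, ⟨hd3.symm, hv⟩, Or.inr kd⟩
      · exact con_two_aux h hwγ ht hv (by omega) h1 h2
    · have h2 := h12.resolve_left h1
      rw [con_comm]
      exact con_two_aux h.symm hwγ hv ht (by omega) h2 h1
  · obtain ⟨ht, hv, hK⟩ := (con_not h hw).mp hs
    obtain ⟨x, y, hxy, hx, hy, hz⟩ := h.np.two s hK hc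
    have hxw : x ≠ w := by
      rintro rfl; exact h.fresh _ ((hz x hx).mpr (Or.inl rfl)) (by simp)
    have hyw : y ≠ w := by
      rintro rfl; exact h.fresh _ ((hz y hy).mpr (Or.inr rfl)) (by simp)
    have nb : ¬ ((x = t ∨ y = t) ∧ (x = v ∨ y = v)) := by
      rintro ⟨h1, h2⟩
      refine no_both h ht hv hc ((hz t ht).mpr ?_) ((hz v hv).mpr ?_) <;> omega
    refine ⟨phi t v w x, phi t v w y, ?_, ?_, ?_, fun z hzs => ?_⟩
    · unfold phi; split_ifs <;> omega
    · unfold phi; split_ifs <;> assumption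
    · unfold phi; split_ifs <;> assumption
    · by_cases hzw : z = w
      · subst hzw
        rw [con_w h hw, hz t ht, hz v hv]
        simp only [ht, hv, not_false_eq_true, true_and]
        unfold phi; split_ifs <;> omega
      · rw [con_not h (by simp [hw, Ne.symm hzw])]
        simp only [Finset.mem_insert, not_or, ht, hv, not_false_eq_true, and_true]
        rw [hz z hzs]
        unfold phi; split_ifs <;> omega

theorem ladj_t (h : Ctr K t v w) {γ : Finset ℕ} (hv : v ∉ γ) {x y : ℕ}
    (hl : LAdj K (insert t γ) x y) (hx : x ≠ v) (hy : y ≠ v) (ht : t ∉ γ) :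
    LAdj (con K t v w) (insert w γ) x y := by
  obtain ⟨h1, h2, h3⟩ := hl
  have hw := h.fresh _ h3
  simp only [Finset.mem_insert, not_or] at h1 h2 hw
  refine ⟨by simp [h1, Ne.symm hw.1], by simp [h2, Ne.symm hw.2.1], ?_⟩
  have e : insert x (insert y (insert w γ)) = insert w (insert x (insert y γ)) := by
    ext; simp; tauto
  have e' : insert x (insert y (insert t γ)) = insert t (insert x (insert y γ)) := by
    ext; simp; tauto
  rw [e, con_w h (by simp [hw])]
  rw [e'] at h3
  refine ⟨by simp [ht, Ne.symm h1.1, Ne.symm h2.1], by simp [hv, hx.symm, hy.symm], Or.inl h3⟩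

theorem side_conn (h : Ctr K t v w) {γ : Finset ℕ} (ht : t ∉ γ) (hv : v ∉ γ) (hc : γ.card ≤ 1)
    {x y : ℕ} (hx : x ∉ γ) (hy : y ∉ γ) (hxt : x ≠ t) (hxv : x ≠ v) (hyt : y ≠ t) (hyv : y ≠ v)
    (hxK : insert t (insert x γ) ∈ K.faces) (hyK : insert t (insert y γ) ∈ K.faces) :
    Relation.ReflTransGen (LAdj (con K t v w) (insert w γ)) x y := by
  have hle : (insert t γ).card ≤ 2 := by rw [Finset.card_insert_of_notMem ht]; omega
  have hK : insert t γ ∈ K.faces := mono hxK (by intro c; simp; tauto) (by simp)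
  have path := h.np.lconn (insert t γ) (Or.inr hK) hle x y (by simp [hx, hxt]) (by simp [hy, hyt])
    (by rw [Finset.insert_comm]; exact hxK) (by rw [Finset.insert_comm]; exact hyK)
  refine reroute (r := v) (fun a b ha hb hl => ladj_t h hv hl ha hb ht) ?_ path hxv hyv
  intro a b ha hb hav hbv
  rcases Nat.lt_or_ge γ.card 1 with h0 | h0
  · have : γ = ∅ := Finset.card_eq_zero.mp (by omega)
    subst this
    obtain ⟨a1, a2, a3⟩ := ha
    obtain ⟨b1, b2, b3⟩ := hb
    simp at a1 b2
    have := h.np.lconn {t, v} (Or.inr h.edge) (by rw [Finset.card_pair h.htv]) a b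
      (by simp [a1, hav]) (by simp [b2, hbv])
      (mono a3 (by intro c; simp; tauto) (by simp)) (mono b3 (by intro c; simp; tauto) (by simp))
    refine rtg_mono this ?_
    rintro c d ⟨c1, c2, c3⟩
    simp only [Finset.mem_insert, Finset.mem_singleton, not_or] at c1 c2
    refine ladj_t h hv ⟨by simp [c1], by simp [c2], mono c3 (by intro c; simp; tauto) (by simp)⟩
      c1.2 c2.2 ht
  · have h2 : (insert t γ).card = 2 := by rw [Finset.card_insert_of_notMem ht]; omega
    exact rtg_mono (parity h.np h2 ha hb hav hbv) fun c d hl => ladj_t h hv hl.1 hl.2.1 hl.2.2 ht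

theorem con_lconn (h : Ctr K t v w) : ∀ s, (s = ∅ ∨ s ∈ (con K t v w).faces) → s.card ≤ 2 →
    ∀ x y, x ∉ s → y ∉ s → insert x s ∈ (con K t v w).faces → insert y s ∈ (con K t v w).faces →
    Relation.ReflTransGen (LAdj (con K t v w) s) x y := by
  intro s hs hc x y hx hy hxs hys
  by_cases hw : w ∈ s
  · obtain ⟨γ, hwγ, rfl⟩ : ∃ γ, w ∉ γ ∧ s = insert w γ :=
      ⟨s.erase w, by simp, by rw [Finset.insert_erase hw]⟩
    rw [Finset.card_insert_of_notMem hwγ] at hc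
    simp only [Finset.mem_insert, not_or] at hx hy
    rw [Finset.insert_comm, con_w h (by simp [hwγ, Ne.symm hx.1])] at hxs
    rw [Finset.insert_comm, con_w h (by simp [hwγ, Ne.symm hy.1])] at hys
    simp only [Finset.mem_insert, not_or] at hxs hys
    obtain ⟨⟨xt, ht⟩, ⟨xv, hv⟩, hx'⟩ := hxs
    obtain ⟨⟨yt, -⟩, ⟨yv, -⟩, hy'⟩ := hys
    have S1 : ∀ x y, x ∉ γ → y ∉ γ → x ≠ t → x ≠ v → y ≠ t → y ≠ v →
        insert t (insert x γ) ∈ K.faces → insert t (insert y γ) ∈ K.faces →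
        Relation.ReflTransGen (LAdj (con K t v w) (insert w γ)) x y :=
      fun x y a b c d e f g k => side_conn h ht hv (by omega) a b c d e f g k
    have S2 : ∀ x y, x ∉ γ → y ∉ γ → x ≠ t → x ≠ v → y ≠ t → y ≠ v →
        insert v (insert x γ) ∈ K.faces → insert v (insert y γ) ∈ K.faces →
        Relation.ReflTransGen (LAdj (con K t v w) (insert w γ)) x y := by
      intro x y a b c d e f g k
      rw [con_comm]
      exact side_conn h.symm hv ht (by omega) a b d c f e g k
    have cross : ∀ x y, x ∉ γ → y ∉ γ → x ≠ t → x ≠ v → y ≠ t → y ≠ v →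
        insert t (insert x γ) ∈ K.faces → insert v (insert y γ) ∈ K.faces →
        ∃ z, z ∉ γ ∧ z ≠ t ∧ z ≠ v ∧ insert t (insert z γ) ∈ K.faces ∧
          insert v (insert z γ) ∈ K.faces := by
      intro x y a b c d e f g k
      have h3 := h.lc γ ht hv (mono g (by intro c; simp; tauto) (by simp))
        (mono k (by intro c; simp; tauto) (by simp))
      obtain ⟨F, hF, hsF, cF⟩ := h.np.ext _ h3
      have c3 : (insert t (insert v γ)).card ≤ 3 := by
        rw [Finset.card_insert_of_notMem (by simp [ht, h.htv]), Finset.card_insert_of_notMem hv]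
        omega
      obtain ⟨z, hzF, hz⟩ : ∃ z ∈ F, z ∉ insert t (insert v γ) :=
        Finset.exists_mem_notMem_of_card_lt_card (by omega)
      simp only [Finset.mem_insert, not_or] at hz
      refine ⟨z, hz.2.2, hz.1, hz.2.1, mono hF ?_ (by simp), mono hF ?_ (by simp)⟩
      · intro c hc
        simp only [Finset.mem_insert] at hc
        rcases hc with rfl | rfl | hc
        · exact hsF (by simp)
        · exact hzF
        · exact hsF (by simp [hc])
      · intro c hc
        simp only [Finset.mem_insert] at hc
        rcases hc with rfl | rfl | hc
        · exact hsF (by simp)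
        · exact hzF
        · exact hsF (by simp [hc])
    rcases hx' with hx' | hx' <;> rcases hy' with hy' | hy'
    · exact S1 x y hx.2 hy.2 (Ne.symm xt) (Ne.symm xv) (Ne.symm yt) (Ne.symm yv) hx' hy'
    · obtain ⟨z, z1, z2, z3, z4, z5⟩ := cross x y hx.2 hy.2 (Ne.symm xt) (Ne.symm xv) (Ne.symm yt)
        (Ne.symm yv) hx' hy'
      exact (S1 x z hx.2 z1 (Ne.symm xt) (Ne.symm xv) z2 z3 hx' z4).trans
        (S2 z y z1 hy.2 z2 z3 (Ne.symm yt) (Ne.symm yv) z5 hy')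
    · obtain ⟨z, z1, z2, z3, z4, z5⟩ := cross y x hy.2 hx.2 (Ne.symm yt) (Ne.symm yv) (Ne.symm xt)
        (Ne.symm xv) hy' hx'
      exact (S2 x z hx.2 z1 (Ne.symm xt) (Ne.symm xv) z2 z3 hx' z5).trans
        (S1 z y z1 hy.2 z2 z3 (Ne.symm yt) (Ne.symm yv) z4 hy')
    · exact S2 x y hx.2 hy.2 (Ne.symm xt) (Ne.symm xv) (Ne.symm yt) (Ne.symm yv) hx' hy'
  · have hs' : t ∉ s ∧ v ∉ s ∧ (s = ∅ ∨ s ∈ K.faces) := by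
      rcases hs with rfl | hs
      · simp
      · have := (con_not h hw).mp hs
        exact ⟨this.1, this.2.1, Or.inr this.2.2⟩
    obtain ⟨ht, hv, hs'⟩ := hs'
    have pre : ∀ x, x ∉ s → insert x s ∈ (con K t v w).faces →
        ∃ x0, x0 ∉ s ∧ insert x0 s ∈ K.faces ∧ phi t v w x0 = x := by
      intro x hx hxs
      by_cases hxw : x = w
      · subst hxw
        obtain ⟨-, -, h1 | h1⟩ := (con_w h hw).mp hxs
        · exact ⟨t, ht, h1, by simp [phi]⟩
        · exact ⟨v, hv, h1, by simp [phi]⟩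
      · have := (con_not h (by simp [hw, Ne.symm hxw])).mp hxs
        simp only [Finset.mem_insert, not_or] at this
        exact ⟨x, hx, this.2.2, by simp [phi, Ne.symm this.1.1, Ne.symm this.2.1.1]⟩
    obtain ⟨x0, hx0, hx0s, rfl⟩ := pre x hx hxs
    obtain ⟨y0, hy0, hy0s, rfl⟩ := pre y hy hys
    refine rtg_lift (phi t v w) ?_ (h.np.lconn s hs' hc x0 y0 hx0 hy0 hx0s hy0s)
    rintro a b ⟨ha, hb, hab⟩
    refine ⟨?_, ?_, ?_⟩
    · unfold phi; split_ifs <;> assumption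
    · unfold phi; split_ifs <;> assumption
    · refine Finset.mem_image.mpr ⟨_, hab, ?_⟩
      rw [Finset.image_insert, Finset.image_insert, phi_id ht hv]

theorem con_np (h : Ctr K t v w) : NP (con K t v w) where
  ne := h.np.ne.image _
  ext := by
    intro s hs
    obtain ⟨s0, h0, rfl⟩ := Finset.mem_image.mp hs
    obtain ⟨s1, h1, hn, e⟩ : ∃ s1 ∈ K.faces, ¬ (t ∈ s1 ∧ v ∈ s1) ∧
        s0.image (phi t v w) = s1.image (phi t v w) := by
      by_cases hb : t ∈ s0 ∧ v ∈ s0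
      · have htm : t ∈ s0.erase v := by simp [hb, h.htv]
        refine ⟨s0.erase v, mono h0 (Finset.erase_subset _ _) ⟨t, htm⟩, by simp, ?_⟩
        conv_lhs => rw [← Finset.insert_erase hb.2]
        rw [Finset.image_insert, Finset.insert_eq_self]
        exact Finset.mem_image.mpr ⟨t, htm, by simp [phi]⟩
      · exact ⟨s0, h0, hb, rfl⟩
    obtain ⟨F, hF, hsF, cF, hFn⟩ := facet_avoid h h1 hn
    refine ⟨F.image (phi t v w), Finset.mem_image.mpr ⟨F, hF, rfl⟩, ?_, ?_⟩
    · simp only [e]; exact Finset.image_subset_image hsF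
    · rw [Finset.card_image_of_injOn, cF]
      intro a ha b hb hab
      have ha' : a ∈ F := ha
      have hb' : b ∈ F := hb
      have hw := h.fresh F hF
      have haw : a ≠ w := by rintro rfl; exact hw ha'
      have hbw : b ≠ w := by rintro rfl; exact hw hb'
      unfold phi at hab
      grind
  le := by
    intro s hs
    obtain ⟨s0, h0, rfl⟩ := Finset.mem_image.mp hs
    exact Finset.card_image_le.trans (h.np.le s0 h0)
  two := con_two h
  lconn := con_lconn h


end
section
variable {K : SComplex} {t v w : ℕ}

theorem inter_single {s : Finset ℕ} {t : ℕ} : s ∩ {t} = ∅ ↔ t ∉ s := by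
  rw [← Finset.disjoint_iff_inter_eq_empty]; simp

theorem bdry_mem (h : Ctr K t v w) (s : Finset ℕ) :
    s ∈ bdryFaces (K.faces.filter fun α => t ∉ α ∧ v ∉ α) 3 ↔
      s ∈ K.faces ∧ t ∉ s ∧ v ∉ s ∧ (insert t s ∈ K.faces ∨ insert v s ∈ K.faces) := by
  unfold bdryFaces
  simp only [Finset.mem_filter]
  constructor
  · rintro ⟨⟨hs, ht, hv⟩, r, ⟨hr, hrt, hrv⟩, hsr, hc, h1⟩
    refine ⟨hs, ht, hv, ?_⟩
    obtain ⟨x, y, hxy, hx, hy, hz⟩ := h.np.two r hr hc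
    have hxK := (hz x hx).mpr (Or.inl rfl)
    have hyK := (hz y hy).mpr (Or.inr rfl)
    by_cases hcase : (x = t ∨ x = v) ∨ (y = t ∨ y = v)
    · rcases hcase with (rfl | rfl) | (rfl | rfl)
      · left; exact mono hxK (Finset.insert_subset_insert _ hsr) (by simp)
      · right; exact mono hxK (Finset.insert_subset_insert _ hsr) (by simp)
      · left; exact mono hyK (Finset.insert_subset_insert _ hsr) (by simp)
      · right; exact mono hyK (Finset.insert_subset_insert _ hsr) (by simp)
    · exfalso
      push Not at hcase
      obtain ⟨⟨a, b⟩, c, d⟩ := hcase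
      have hne : insert x r ≠ insert y r := by
        intro e
        have : x ∈ insert y r := by rw [← e]; simp
        simp [hx, hxy] at this
      obtain ⟨M, hM⟩ := Finset.card_eq_one.mp h1
      have m1 : insert x r = M := by
        rw [← Finset.mem_singleton, ← hM]
        simp only [Finset.mem_filter]
        refine ⟨⟨hxK, by simp [hrt, a.symm], by simp [hrv, b.symm]⟩, ?_, Finset.subset_insert _ _⟩
        rw [Finset.card_insert_of_notMem hx, hc]
      have m2 : insert y r = M := by
        rw [← Finset.mem_singleton, ← hM]
        simp only [Finset.mem_filter]
        refine ⟨⟨hyK, by simp [hrt, c.symm], by simp [hrv, d.symm]⟩, ?_, Finset.subset_insert _ _⟩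
        rw [Finset.card_insert_of_notMem hy, hc]
      exact hne (m1.trans m2.symm)
  · have key : ∀ t v, Ctr K t v w → s ∈ K.faces → t ∉ s → v ∉ s → insert t s ∈ K.faces →
        ∃ r, (r ∈ K.faces ∧ t ∉ r ∧ v ∉ r) ∧ s ⊆ r ∧ r.card = 3 ∧
        ({x ∈ K.faces | (t ∉ x ∧ v ∉ x) ∧ x.card = 3 + 1 ∧ r ⊆ x}).card = 1 := by
      intro t v h hs ht hv htK
      obtain ⟨F, hF, hsF, cF, hn⟩ := facet_avoid h htK (by simp [hv, h.htv.symm])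
      have htF : t ∈ F := hsF (by simp)
      have hvF : v ∉ F := fun hv => hn ⟨htF, hv⟩
      have hsr : s ⊆ F.erase t :=
        Finset.subset_erase.mpr ⟨(Finset.subset_insert _ _).trans hsF, ht⟩
      have hsne : s.Nonempty := Finset.nonempty_iff_ne_empty.mpr
        (fun e => K.not_empty_mem (e ▸ hs))
      have c3 : (F.erase t).card = 3 := by rw [Finset.card_erase_of_mem htF, cF]
      have hrK := mono hF (Finset.erase_subset t F) (hsne.mono hsr)
      refine ⟨F.erase t, ⟨hrK, by simp, by simp [hvF]⟩, hsr, c3, ?_⟩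
      obtain ⟨x, y, hxy, hx, hy, hz⟩ := h.np.two _ hrK c3
      have ht1 : t ∉ F.erase t := by simp
      have hv1 : v ∉ F.erase t := by simp [hvF]
      have htz := (hz t ht1).mp (by rw [Finset.insert_erase htF]; exact hF)
      have hvz : ¬ (v = x ∨ v = y) := fun e => no_both h ht1 hv1 c3
        (by rw [Finset.insert_erase htF]; exact hF) ((hz v hv1).mpr e)
      obtain ⟨c, hct, hc, hcz⟩ : ∃ c, c ≠ t ∧ c ∉ F.erase t ∧ ∀ z, (z = x ∨ z = y) ↔ (z = t ∨ z = c) := by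
        rcases htz with rfl | rfl
        · exact ⟨y, hxy.symm, hy, fun z => Iff.rfl⟩
        · exact ⟨x, hxy, hx, fun z => or_comm⟩
      rw [hcz] at hvz
      push Not at hvz
      rw [Finset.card_eq_one]
      refine ⟨insert c (F.erase t), ?_⟩
      ext M
      simp only [Finset.mem_filter, Finset.mem_singleton]
      constructor
      · rintro ⟨hM, ⟨hMt, hMv⟩, cM, hrM⟩
        obtain ⟨z, hz1, rfl⟩ := eq_insert_of_card hrM (by omega)
        have := (hcz z).mp ((hz z hz1).mp hM)
        rcases this with rfl | rfl
        · simp at hMt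
        · rfl
      · rintro rfl
        refine ⟨(hz c hc).mpr ((hcz c).mpr (Or.inr rfl)), ⟨by simp [hct.symm], ?_⟩, ?_,
          Finset.subset_insert _ _⟩
        · simp [hvz.2, hvF]
        · rw [Finset.card_insert_of_notMem hc, c3]
    rintro ⟨hs, ht, hv, hK | hK⟩
    · obtain ⟨r, hr, hsr, cr, h1⟩ := key t v h hs ht hv hK
      refine ⟨⟨hs, ht, hv⟩, r, hr, hsr, cr, ?_⟩
      refine Eq.trans (congrArg Finset.card ?_) h1
      ext M; simp only [Finset.mem_filter]; tauto
    · obtain ⟨r, hr, hsr, cr, h1⟩ := key v t h.symm hs hv ht hK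
      refine ⟨⟨hs, ht, hv⟩, r, ⟨hr.1, hr.2.2, hr.2.1⟩, hsr, cr, ?_⟩
      refine Eq.trans (congrArg Finset.card ?_) h1
      ext M; simp only [Finset.mem_filter]; tauto

theorem con_contraction (h : Ctr K t v w) : EdgeContraction K (con K t v w) := by
  refine ⟨t, v, h.edge, h.htv, ?_, w, ?_, ?_⟩
  · ext γ
    simp only [lk, Finset.mem_inter, Finset.mem_filter]
    have e1 : ∀ γ : Finset ℕ, γ ∩ {t} = ∅ ↔ t ∉ γ := fun γ => inter_single
    have e2 : ∀ γ : Finset ℕ, γ ∩ {v} = ∅ ↔ v ∉ γ := fun γ => inter_single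
    have e3 : ∀ γ : Finset ℕ, γ ∩ {t, v} = ∅ ↔ t ∉ γ ∧ v ∉ γ := by
      intro γ
      rw [← Finset.disjoint_iff_inter_eq_empty]; simp
    have u1 : ∀ x, γ ∪ {x} = insert x γ := by intro x; ext; simp
    have u2 : γ ∪ {t, v} = insert t (insert v γ) := by ext; simp
    rw [e1, e2, e3, u1, u1, u2]
    constructor
    · rintro ⟨⟨h1, h2, h3⟩, -, h4, h5⟩
      exact ⟨h1, ⟨h2, h4⟩, h.lc γ h2 h4 h3 h5⟩
    · rintro ⟨h1, ⟨h2, h3⟩, h4⟩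
      exact ⟨⟨h1, h2, mono h4 (by intro c; simp; tauto) (by simp)⟩, h1, h3,
        mono h4 (by intro c; simp; tauto) (by simp)⟩
  · unfold vertexSet
    rw [Finset.mem_sup]
    rintro ⟨s, hs, hw⟩
    exact h.fresh s hs hw
  · ext s
    simp only [coneFaces, Finset.mem_union, Finset.mem_image, Finset.mem_singleton, bdry_mem h]
    simp only [Finset.mem_filter]
    constructor
    · intro hs
      by_cases hw : w ∈ s
      · obtain ⟨γ, hwγ, rfl⟩ : ∃ γ, w ∉ γ ∧ s = insert w γ :=
          ⟨s.erase w, by simp, by rw [Finset.insert_erase hw]⟩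
        obtain ⟨h1, h2, h3⟩ := (con_w h hwγ).mp hs
        by_cases hγ : γ = ∅
        · subst hγ; right; right; rfl
        · right; left; right
          have hne := Finset.nonempty_iff_ne_empty.mpr hγ
          refine ⟨γ, ⟨?_, h1, h2, h3⟩, rfl⟩
          rcases h3 with h3 | h3
          · exact mono h3 (Finset.subset_insert _ _) hne
          · exact mono h3 (Finset.subset_insert _ _) hne
      · have := (con_not h hw).mp hs
        left; tauto
    · rintro (⟨h1, h2, h3⟩ | ((⟨h1, h2, h3, h4⟩ | ⟨γ, ⟨h1, h2, h3, h4⟩, rfl⟩) | rfl))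
      · exact (con_not h (h.fresh s h1)).mpr ⟨h2, h3, h1⟩
      · exact (con_not h (h.fresh s h1)).mpr ⟨h2, h3, h1⟩
      · exact (con_w h (h.fresh γ h1)).mpr ⟨h2, h3, h4⟩
      · have := (con_w h (γ := ∅) (by simp)).mpr ⟨by simp, by simp, Or.inl ?_⟩
        · exact this
        · exact mono h.edge (by intro c; simp; tauto) (by simp)

/-- Counting for the contraction. -/
theorem con_g2 (h : Ctr K t v w) (full : ∀ x, x ≠ t → x ≠ v → {t, x} ∈ K.faces → {v, x} ∈ K.faces)
    (hd : 5 ≤ K.deg {t}) : (con K t v w).g2 < K.g2 := by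
  have hwt := h.wt
  have hwv := h.wv
  have htv := h.htv
  have htK : {t} ∈ K.faces := mono h.edge (by simp) (by simp)
  have hvK : {v} ∈ K.faces := mono h.edge (by simp) (by simp)
  -- edges
  have E : (con K t v w).fnum 1 + K.deg {t} ≤ K.fnum 1 := by
    unfold fnum deg fnum
    have split := Finset.card_filter_add_card_filter_not (s := K.faces.filter fun s => s.card = 1 + 1)
      (fun s => t ∉ s)
    rw [← split]
    apply Nat.add_le_add
    · refine Finset.card_le_card_of_injOn (fun e => e.image (fun x => if x = w then v else x)) ?_ ?_
      · intro e he
        have he := Finset.mem_coe.mp he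
        rw [Finset.mem_filter] at he
        obtain ⟨he, hc⟩ := he
        rw [Finset.mem_coe, Finset.mem_filter, Finset.mem_filter]
        by_cases hw : w ∈ e
        · obtain ⟨γ, hwγ, rfl⟩ : ∃ γ, w ∉ γ ∧ e = insert w γ :=
            ⟨e.erase w, by simp, by rw [Finset.insert_erase hw]⟩
          rw [Finset.card_insert_of_notMem hwγ] at hc
          obtain ⟨x, rfl⟩ := Finset.card_eq_one.mp (by omega : γ.card = 1)
          obtain ⟨h1, h2, h3⟩ := (con_w h hwγ).mp he
          simp only [Finset.mem_singleton] at h1 h2 hwγ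
          have : ({w, x} : Finset ℕ).image (fun x => if x = w then v else x) = {v, x} := by
            rw [Finset.image_insert, Finset.image_singleton]; simp [Ne.symm hwγ]
          simp only [this]
          refine ⟨⟨?_, Finset.card_pair h2⟩, by simp [htv, h1]⟩
          rcases h3 with h3 | h3
          · exact full x (Ne.symm h1) (Ne.symm h2) h3
          · exact h3
        · obtain ⟨h1, h2, h3⟩ := (con_not h hw).mp he
          have : e.image (fun x => if x = w then v else x) = e := by
            rw [Finset.image_congr (g := id), Finset.image_id]
            intro x hx
            have : x ≠ w := by rintro rfl; exact hw hx
            simp [this]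
          simp only [this]
          exact ⟨⟨h3, hc⟩, h1⟩
      · intro e he e' he' hee
        have he := (con_tv h (Finset.mem_filter.mp (Finset.mem_coe.mp he)).1).2
        have he' := (con_tv h (Finset.mem_filter.mp (Finset.mem_coe.mp he')).1).2
        have back : ∀ e : Finset ℕ, v ∉ e →
            (e.image (fun x => if x = w then v else x)).image (fun x => if x = v then w else x) = e := by
          intro e hv
          rw [Finset.image_image, Finset.image_congr (g := id), Finset.image_id]
          intro x hx
          have : x ≠ v := by rintro rfl; exact hv hx
          simp only [Function.comp, id]
          split_ifs <;> simp_all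
        rw [← back e he, ← back e' he']
        simp only at hee
        rw [hee]
    · refine Finset.card_le_card_of_injOn (fun s => insert t s) ?_ ?_
      · intro s hs
        have hs := Finset.mem_coe.mp hs
        simp only [lk, Finset.mem_filter] at hs
        obtain ⟨⟨h1, h2, h3⟩, h4⟩ := hs
        have hts : t ∉ s := inter_single.mp h2
        simp only [Finset.mem_coe, Finset.mem_filter]
        refine ⟨⟨?_, by rw [Finset.card_insert_of_notMem hts, h4]⟩, by simp⟩
        rw [Finset.union_comm] at h3; exact h3
      · intro s hs s' hs' e
        have hs := Finset.mem_coe.mp hs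
        have hs' := Finset.mem_coe.mp hs'
        simp only [lk, Finset.mem_filter] at hs hs'
        have hts : t ∉ s := inter_single.mp hs.1.2.1
        have hts' : t ∉ s' := inter_single.mp hs'.1.2.1
        simp only at e
        rw [← Finset.erase_insert hts, ← Finset.erase_insert hts', e]
  have V : K.fnum 0 ≤ (con K t v w).fnum 0 + 1 := by
    unfold fnum
    have htm : {t} ∈ K.faces.filter fun s => s.card = 0 + 1 := by simp [htK]
    rw [← Finset.card_erase_add_one htm]
    apply Nat.add_le_add_right
    refine Finset.card_le_card_of_injOn (fun e => e.image (phi t v w)) ?_ ?_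
    · intro e he
      have he := Finset.mem_coe.mp he
      rw [Finset.mem_erase, Finset.mem_filter] at he
      rw [Finset.mem_coe, Finset.mem_filter]
      refine ⟨Finset.mem_image.mpr ⟨e, he.2.1, rfl⟩, ?_⟩
      obtain ⟨x, rfl⟩ := Finset.card_eq_one.mp he.2.2
      simp
    · intro e he e' he' hee
      have he := Finset.mem_coe.mp he
      have he' := Finset.mem_coe.mp he'
      rw [Finset.mem_erase, Finset.mem_filter] at he he'
      obtain ⟨x, rfl⟩ := Finset.card_eq_one.mp he.2.2
      obtain ⟨y, rfl⟩ := Finset.card_eq_one.mp he'.2.2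
      have hxw : x ≠ w := by rintro rfl; exact h.fresh _ he.2.1 (by simp)
      have hyw : y ≠ w := by rintro rfl; exact h.fresh _ he'.2.1 (by simp)
      simp only [Finset.image_singleton, Finset.singleton_inj, ne_eq] at hee he he' ⊢
      have := he.1
      have := he'.1
      unfold phi at hee
      grind
  unfold g2
  omega


end
section

/-- Label triples. -/
abbrev Tr := ℕ × ℕ × ℕ

/-- The image of a label triple. -/
def im (f : ℕ → ℕ) (τ : Tr) : Finset ℕ := {f τ.1, f τ.2.1, f τ.2.2}

/-- A connected closed surface-like set of triangles. -/
structure Surf (T : Finset ℕ → Prop) (V : Finset ℕ) (n D : ℕ) : Prop where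
  ex : ∃ s, T s
  card : ∀ s, T s → s.card = 3
  two : ∀ a b c, T {a, b, c} → ∃ d, d ≠ c ∧ T {a, b, d} ∧ ∀ e, T {a, b, e} → e = c ∨ e = d
  conn : ∀ S : Finset ℕ → Prop, (∃ s, T s ∧ S s) →
    (∀ a b c d, T {a, b, c} → S {a, b, c} → T {a, b, d} → S {a, b, d}) → ∀ s, T s → S s
  sub : ∀ s, T s → s ⊆ V
  cover : ∀ x ∈ V, ∃ s, T s ∧ x ∈ s
  cV : V.card = n
  deg : ∀ (x : ℕ) (S : Finset ℕ), (∀ y ∈ S, y ≠ x ∧ ∃ s, T s ∧ x ∈ s ∧ y ∈ s) → S.card ≤ D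

def edgesOf (ts : List Tr) : List Tr :=
  ts.flatMap fun τ => [(τ.1, τ.2.1, τ.2.2), (τ.1, τ.2.2, τ.2.1), (τ.2.1, τ.2.2, τ.1)]

def third (i j : ℕ) (ts : List Tr) : List ℕ :=
  (edgesOf ts).flatMap fun e =>
    if (e.1 = i ∧ e.2.1 = j) ∨ (e.1 = j ∧ e.2.1 = i) then [e.2.2] else []

def nbs (i : ℕ) (ts : List Tr) : List ℕ :=
  ts.flatMap fun τ => if i = τ.1 then [τ.2.1, τ.2.2] else if i = τ.2.1 then [τ.1, τ.2.2] else
    if i = τ.2.2 then [τ.1, τ.2.1] else []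

def bad (D m : ℕ) (ts : List Tr) : Bool :=
  ((edgesOf ts).any fun e => decide (2 < (third e.1 e.2.1 ts).dedup.length)) ||
  ((List.range m).any fun i => decide (D < (nbs i ts).dedup.length))

def findOpen (ts : List Tr) : Option Tr :=
  (edgesOf ts).find? fun e => (third e.1 e.2.1 ts).all fun l => decide (l = e.2.2)

def lst (τ : Tr) : List ℕ := [τ.1, τ.2.1, τ.2.2]

def same (τ ρ : Tr) : Bool :=
  ((lst τ).all fun x => decide (x ∈ lst ρ)) && ((lst ρ).all fun x => decide (x ∈ lst τ))

def prm (p : List ℕ) (x : ℕ) : ℕ := p.getD x 0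

def mapT (p : List ℕ) (τ : Tr) : Tr := (prm p τ.1, prm p τ.2.1, prm p τ.2.2)

def matchOk (m : ℕ) (ts : List Tr) (c : List Tr × List ℕ) : Bool :=
  decide (c.2.length = m) && decide c.2.Nodup && (c.2.all fun x => decide (x < m)) &&
  (c.1.all fun τ => ts.any fun ρ => same (mapT c.2 τ) ρ) &&
  (ts.all fun ρ => c.1.any fun τ => same (mapT c.2 τ) ρ)

def search (n D : ℕ) (certs : List (List Tr × List ℕ)) : ℕ → ℕ → List Tr → Bool
  | 0, _, _ => false
  | q + 1, m, ts =>
    bad D m ts ||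
    match findOpen ts with
    | some (i, j, k) => (List.range (min n (m + 1))).all fun l =>
        decide (l = i) || decide (l = j) || decide (l = k) ||
          search n D certs q (max m (l + 1)) ((i, j, l) :: ts)
    | none => decide (m ≠ n) || certs.any (matchOk m ts)

def tetM : List Tr := [(0,1,2),(0,1,3),(0,2,3),(1,2,3)]
def octM : List Tr := [(0,1,2),(0,1,5),(0,4,2),(0,4,5),(3,1,2),(3,1,5),(3,4,2),(3,4,5)]
def bipM : List Tr := [(0,1,5),(0,1,6),(1,2,5),(1,2,6),(2,3,5),(2,3,6),(3,4,5),(3,4,6),(4,0,5),(4,0,6)]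
def stoM : List Tr := [(0,1,6),(0,2,6),(1,2,6),(0,1,5),(0,4,2),(0,4,5),(3,1,2),(3,1,5),(3,4,2),(3,4,5)]

def cs : List (List Tr × List ℕ) := [(tetM, [0,1,2,3]), (octM, [0,1,2,5,4,3]),
  (stoM, [1,2,3,4,5,6,0]), (stoM, [1,2,5,4,3,0,6]), (stoM, [1,3,5,4,2,0,6]),
  (stoM, [2,4,6,3,1,0,5]), (stoM, [3,4,5,2,1,0,6]), (stoM, [0,1,5,6,4,3,2]),
  (stoM, [0,2,4,6,3,1,5]), (stoM, [0,3,5,6,2,1,4]), (stoM, [0,1,4,6,5,2,3]),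
  (stoM, [0,2,3,6,4,5,1]), (bipM, [0,1,6,5,4,2,3]), (bipM, [0,2,5,6,3,1,4]),
  (bipM, [1,2,5,4,3,0,6])]

theorem search3 : search 3 3 cs 40 3 [(0,1,2)] = true := by decide +kernel
theorem search4 : search 4 3 cs 40 3 [(0,1,2)] = true := by decide +kernel
theorem search5 : search 5 3 cs 40 3 [(0,1,2)] = true := by decide +kernel
theorem search6 : search 6 4 cs 40 3 [(0,1,2)] = true := by decide +kernel
theorem search7 : search 7 5 cs 40 3 [(0,1,2)] = true := by decide +kernel

theorem mem_edgesOf {ts : List Tr} {e : Tr} : e ∈ edgesOf ts ↔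
    ∃ a b c, (a, b, c) ∈ ts ∧ (e = (a, b, c) ∨ e = (a, c, b) ∨ e = (b, c, a)) := by
  unfold edgesOf
  simp only [List.mem_flatMap]
  constructor
  · rintro ⟨⟨a, b, c⟩, h1, h2⟩
    exact ⟨a, b, c, h1, by simpa using h2⟩
  · rintro ⟨a, b, c, h1, h2⟩
    exact ⟨(a, b, c), h1, by simpa using h2⟩

variable {T : Finset ℕ → Prop} {V : Finset ℕ} {n D : ℕ}

/-- Invariant of the search. -/
structure Inv (T : Finset ℕ → Prop) (V : Finset ℕ) (f : ℕ → ℕ) (m : ℕ) (ts : List Tr) : Prop where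
  inj : ∀ i < m, ∀ j < m, f i = f j → i = j
  vert : ∀ i < m, f i ∈ V
  tri : ∀ a b c, (a, b, c) ∈ ts → a < m ∧ b < m ∧ c < m ∧ T {f a, f b, f c}
  ne : ts ≠ []

theorem Inv.edge {f : ℕ → ℕ} {m : ℕ} {ts : List Tr} (h : Inv T V f m ts) {e : Tr}
    (he : e ∈ edgesOf ts) : e.1 < m ∧ e.2.1 < m ∧ e.2.2 < m ∧ T {f e.1, f e.2.1, f e.2.2} ∧
      ∃ a b c, (a, b, c) ∈ ts ∧ im f (a, b, c) = {f e.1, f e.2.1, f e.2.2} := by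
  obtain ⟨a, b, c, hm, he⟩ := mem_edgesOf.mp he
  obtain ⟨ha, hb, hc, hT⟩ := h.tri a b c hm
  have e1 : ({f a, f c, f b} : Finset ℕ) = {f a, f b, f c} := by ext; simp; tauto
  have e2 : ({f b, f c, f a} : Finset ℕ) = {f a, f b, f c} := by ext; simp; tauto
  rcases he with rfl | rfl | rfl
  · exact ⟨ha, hb, hc, hT, a, b, c, hm, rfl⟩
  · exact ⟨ha, hc, hb, by rw [e1]; exact hT, a, b, c, hm, e1.symm⟩
  · exact ⟨hb, hc, ha, by rw [e2]; exact hT, a, b, c, hm, e2.symm⟩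

theorem Inv.third {f : ℕ → ℕ} {m : ℕ} {ts : List Tr} (h : Inv T V f m ts) {i j l : ℕ}
    (hl : l ∈ SComplex.third i j ts) : l < m ∧ T {f i, f j, f l} ∧
      ∃ a b c, (a, b, c) ∈ ts ∧ im f (a, b, c) = {f i, f j, f l} := by
  unfold SComplex.third at hl
  rw [List.mem_flatMap] at hl
  obtain ⟨⟨a, b, c⟩, he, hl⟩ := hl
  obtain ⟨_, _, h1, h2, h3⟩ := h.edge he
  split_ifs at hl with hc
  · simp only [List.mem_singleton] at hl
    subst hl
    rcases hc with ⟨rfl, rfl⟩ | ⟨rfl, rfl⟩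
    · exact ⟨h1, h2, h3⟩
    · have e1 : ({f b, f a, f l} : Finset ℕ) = {f a, f b, f l} := by ext; simp; tauto
      exact ⟨h1, by rw [e1]; exact h2, by rw [e1]; exact h3⟩
  · simp at hl

theorem Surf.ne {s : Finset ℕ} {a b c : ℕ} (S : Surf T V n D) (h : T {a, b, c}) :
    a ≠ b ∧ a ≠ c ∧ b ≠ c := by
  have := S.card _ h
  refine ⟨?_, ?_, ?_⟩ <;> rintro rfl
  · have h2 := Finset.card_le_two (a := a) (b := c)
    simp at this; omega
  · have h2 := Finset.card_le_two (a := a) (b := b)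
    have e : ({a, b, a} : Finset ℕ) = {a, b} := by ext; simp; tauto
    rw [e] at this; omega
  · have h2 := Finset.card_le_two (a := a) (b := b)
    simp at this; omega

theorem Inv.not_bad {f : ℕ → ℕ} {m : ℕ} {ts : List Tr} (S : Surf T V n D)
    (h : Inv T V f m ts) : bad D m ts = false := by
  by_contra hb
  rw [Bool.not_eq_false, bad, Bool.or_eq_true, List.any_eq_true, List.any_eq_true] at hb
  have img : ∀ l : List ℕ, (∀ x ∈ l, x < m) → (l.dedup.toFinset.image f).card = l.dedup.length := by
    intro l hl
    rw [Finset.card_image_of_injOn, List.toFinset_card_of_nodup (List.nodup_dedup l)]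
    intro x hx y hy hxy
    simp only [Finset.mem_coe, List.mem_toFinset, List.mem_dedup] at hx hy
    exact h.inj x (hl x hx) y (hl y hy) hxy
  rcases hb with ⟨e, he, hlen⟩ | ⟨i, hi, hlen⟩
  · have hlen := of_decide_eq_true hlen
    rw [← img _ (fun x hx => (h.third hx).1)] at hlen
    obtain ⟨_, _, _, hT, _⟩ := h.edge he
    obtain ⟨d, hd, hTd, hall⟩ := S.two _ _ _ hT
    have hsub : ((SComplex.third e.1 e.2.1 ts).dedup.toFinset.image f) ⊆ {f e.2.2, d} := by
      intro y hy
      simp only [Finset.mem_image, List.mem_toFinset, List.mem_dedup] at hy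
      obtain ⟨x, hx, rfl⟩ := hy
      simpa using hall _ (h.third hx).2.1
    have := Finset.card_le_card hsub
    have h2 := Finset.card_le_two (a := f e.2.2) (b := d)
    omega
  · have hlen := of_decide_eq_true hlen
    have hn : ∀ x ∈ nbs i ts, x < m ∧ f x ≠ f i ∧ ∃ s, T s ∧ f i ∈ s ∧ f x ∈ s := by
      intro x hx
      unfold nbs at hx
      rw [List.mem_flatMap] at hx
      obtain ⟨⟨a, b, c⟩, hm, hx⟩ := hx
      obtain ⟨ha, hb, hc, hT⟩ := h.tri a b c hm
      obtain ⟨n1, n2, n3⟩ := S.ne (s := ∅) hT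
      have key : i ∈ [a, b, c] ∧ x ∈ [a, b, c] ∧ f x ≠ f i := by
        split_ifs at hx with c1 c2 c3
        · subst c1; simp at hx; rcases hx with rfl | rfl <;> simp [n1.symm, n2.symm]
        · subst c2; simp at hx; rcases hx with rfl | rfl <;> simp [n1, n3.symm]
        · subst c3; simp at hx; rcases hx with rfl | rfl <;> simp [n2, n3]
        · simp at hx
      obtain ⟨k1, k2, k3⟩ := key
      simp only [List.mem_cons, List.not_mem_nil, or_false] at k1 k2
      refine ⟨by rcases k2 with rfl | rfl | rfl <;> assumption, k3, _, hT, ?_, ?_⟩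
      · rcases k1 with rfl | rfl | rfl <;> simp
      · rcases k2 with rfl | rfl | rfl <;> simp
    rw [← img _ (fun x hx => (hn x hx).1)] at hlen
    have := S.deg (f i) ((nbs i ts).dedup.toFinset.image f) (by
      intro y hy
      simp only [Finset.mem_image, List.mem_toFinset, List.mem_dedup] at hy
      obtain ⟨x, hx, rfl⟩ := hy
      exact (hn x hx).2)
    omega

/-- The triangles are a copy of the model. -/
def Recog (T : Finset ℕ → Prop) (M : List Tr) (m : ℕ) : Prop :=
  ∃ g : ℕ → ℕ, (∀ i < m, ∀ j < m, g i = g j → i = j) ∧ ∀ s, T s ↔ ∃ τ ∈ M, s = im g τ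

theorem same_im {f : ℕ → ℕ} {τ ρ : Tr} (h : same τ ρ = true) : im f τ = im f ρ := by
  unfold same at h
  rw [Bool.and_eq_true, List.all_eq_true, List.all_eq_true] at h
  have e : ∀ τ : Tr, im f τ = (lst τ).toFinset.image f := by
    intro τ; ext; simp [im, lst]
  rw [e, e]
  congr 1
  ext x
  simp only [List.mem_toFinset]
  exact ⟨fun hx => of_decide_eq_true (h.1 x hx), fun hx => of_decide_eq_true (h.2 x hx)⟩

theorem search_sound (S : Surf T V n D) (certs : List (List Tr × List ℕ)) (q : ℕ) :
    ∀ m ts f, Inv T V f m ts → search n D certs q m ts = true →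
    ∃ c ∈ certs, c.2.length = n ∧ (∀ τ ∈ c.1, True) ∧
      ∃ p : ℕ → ℕ, ∃ f : ℕ → ℕ, (∀ i < n, ∀ j < n, p i = p j → i = j) ∧ (∀ i < n, p i < n) ∧
      (∀ i < n, ∀ j < n, f i = f j → i = j) ∧
      ∀ s, T s ↔ ∃ τ ∈ c.1, s = im (f ∘ p) τ := by
  induction q with
  | zero => intro m ts f _ h; simp [search] at h
  | succ q ih =>
    intro m ts f I h
    unfold search at h
    rw [I.not_bad S, Bool.false_or] at h
    have hmn : m ≤ n := by
      have := Finset.card_le_card_of_injOn (s := Finset.range m) (t := V) f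
        (by intro x hx; exact I.vert x (by simpa using hx))
        (by intro x hx y hy e; exact I.inj x (by simpa using hx) y (by simpa using hy) e)
      rwa [Finset.card_range, S.cV] at this
    split at h
    · rename_i i j k ho
      have hmem := List.mem_of_find?_eq_some ho
      obtain ⟨hi, hj, hk, hT, _⟩ := I.edge hmem
      simp only at hi hj hk hT
      obtain ⟨d, hd, hTd, -⟩ := S.two _ _ _ hT
      obtain ⟨n1, n2, n3⟩ := S.ne (s := ∅) hTd
      rw [List.all_eq_true] at h
      by_cases hex : ∃ l < m, f l = d
      · obtain ⟨l, hl, rfl⟩ := hex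
        have := h l (by rw [List.mem_range]; omega)
        have e1 : l ≠ i := by rintro rfl; exact n2 rfl
        have e2 : l ≠ j := by rintro rfl; exact n3 rfl
        have e3 : l ≠ k := by rintro rfl; exact hd rfl
        simp only [e1, e2, e3, decide_false, Bool.false_or] at this
        rw [max_eq_left (by omega)] at this
        refine ih m _ f ⟨I.inj, I.vert, ?_, by simp⟩ this
        intro a b c habc
        rw [List.mem_cons] at habc
        rcases habc with habc | habc
        · simp only [Prod.mk.injEq] at habc
          obtain ⟨rfl, rfl, rfl⟩ := habc
          exact ⟨hi, hj, hl, hTd⟩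
        · exact I.tri a b c habc
      · push Not at hex
        have hup : ∀ x < m, Function.update f m d x = f x := by
          intro x hx; rw [Function.update_of_ne (by omega)]
        have hV : d ∈ V := S.sub _ hTd (by simp)
        have I' : Inv T V (Function.update f m d) (m + 1) ((i, j, m) :: ts) := by
          refine ⟨?_, ?_, ?_, by simp⟩
          · intro x hx y hy e
            rcases Nat.lt_succ_iff_lt_or_eq.mp hx with hx | rfl <;>
            rcases Nat.lt_succ_iff_lt_or_eq.mp hy with hy | rfl
            · rw [hup x hx, hup y hy] at e; exact I.inj x hx y hy e
            · rw [hup x hx, Function.update_self] at e; exact absurd e (hex x hx)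
            · rw [hup y hy, Function.update_self] at e; exact absurd e.symm (hex y hy)
            · rfl
          · intro x hx
            rcases Nat.lt_succ_iff_lt_or_eq.mp hx with hx | rfl
            · rw [hup x hx]; exact I.vert x hx
            · rw [Function.update_self]; exact hV
          · intro a b c habc
            rw [List.mem_cons] at habc
            rcases habc with habc | habc
            · simp only [Prod.mk.injEq] at habc
              obtain ⟨rfl, rfl, rfl⟩ := habc
              rw [hup _ hi, hup _ hj, Function.update_self]
              exact ⟨by omega, by omega, by omega, hTd⟩
            · obtain ⟨ha, hb, hc, hT⟩ := I.tri a b c habc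
              rw [hup _ ha, hup _ hb, hup _ hc]
              exact ⟨by omega, by omega, by omega, hT⟩
        have hmn' : m + 1 ≤ n := by
          have := Finset.card_le_card_of_injOn (s := Finset.range (m + 1)) (t := V)
            (Function.update f m d)
            (by intro x hx; exact I'.vert x (by simpa using hx))
            (by intro x hx y hy e; exact I'.inj x (by simpa using hx) y (by simpa using hy) e)
          rwa [Finset.card_range, S.cV] at this
        have := h m (by rw [List.mem_range]; omega)
        have e1 : m ≠ i := by omega
        have e2 : m ≠ j := by omega
        have e3 : m ≠ k := by omega
        simp only [e1, e2, e3, decide_false, Bool.false_or] at this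
        rw [max_eq_right (by omega)] at this
        exact ih (m + 1) _ _ I' this
    · rename_i ho
      have hcl : ∀ s, T s → ∃ a b c, (a, b, c) ∈ ts ∧ im f (a, b, c) = s := by
        apply S.conn
        · obtain ⟨⟨a, b, c⟩, l, rfl⟩ := List.exists_cons_of_ne_nil I.ne
          exact ⟨_, (I.tri a b c (by simp)).2.2.2, a, b, c, by simp, rfl⟩
        · rintro a b c d hT ⟨x, y, z, hm, he⟩ hTd
          have := I.tri x y z hm
          -- orient the edge
          obtain ⟨i, j, k, hijk, hab, hc⟩ : ∃ i j k, (i, j, k) ∈ edgesOf ts ∧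
              (f i = a ∧ f j = b ∨ f i = b ∧ f j = a) ∧ f k = c := by
            obtain ⟨m1, m2, m3⟩ := S.ne (s := ∅) hT
            have me : ∀ e, (e = (x, y, z) ∨ e = (x, z, y) ∨ e = (y, z, x)) → e ∈ edgesOf ts :=
              fun e he => mem_edgesOf.mpr ⟨x, y, z, hm, he⟩
            have ha : a ∈ im f (x, y, z) := by rw [he]; simp
            have hb : b ∈ im f (x, y, z) := by rw [he]; simp
            have hc : c ∈ im f (x, y, z) := by rw [he]; simp
            simp only [im, Finset.mem_insert, Finset.mem_singleton] at ha hb hc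
            rcases ha with rfl | rfl | rfl <;> rcases hb with rfl | rfl | rfl <;>
              rcases hc with rfl | rfl | rfl <;> first
              | exact absurd rfl m1
              | exact absurd rfl m2
              | exact absurd rfl m3
              | exact ⟨x, y, z, me _ (by simp), by simp, rfl⟩
              | exact ⟨x, z, y, me _ (by simp), by simp, rfl⟩
              | exact ⟨y, z, x, me _ (by simp), by simp, rfl⟩
          have h1 := List.find?_eq_none.mp ho _ hijk
          simp only [List.all_eq_true, not_forall, decide_eq_true_eq] at h1
          obtain ⟨l, hl, hlk⟩ := h1
          obtain ⟨hlm, hTl, a', b', c', hm', he'⟩ := I.third hl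
          have hkm := (I.edge hijk).2.2.1
          have hfl : f l ≠ c := by
            rw [← hc]; intro e; exact hlk (I.inj _ hlm _ hkm e)
          have eab : ∀ u, ({f i, f j, u} : Finset ℕ) = {a, b, u} := by
            intro u
            rcases hab with ⟨rfl, rfl⟩ | ⟨rfl, rfl⟩
            · rfl
            · ext; simp; tauto
          rw [eab] at hTl he'
          obtain ⟨d0, hd0, hTd0, hall⟩ := S.two _ _ _ hT
          have hl0 := (hall _ hTl).resolve_left hfl
          rcases hall _ hTd with rfl | rfl
          · exact ⟨x, y, z, hm, he⟩
          · exact ⟨a', b', c', hm', by rw [he', hl0]⟩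
      have hnm : n ≤ m := by
        have hVs : V ⊆ (Finset.range m).image f := by
          intro x hx
          obtain ⟨s, hs, hxs⟩ := S.cover x hx
          obtain ⟨a, b, c, hm, rfl⟩ := hcl s hs
          obtain ⟨ha, hb, hc, _⟩ := I.tri a b c hm
          simp only [im, Finset.mem_insert, Finset.mem_singleton] at hxs
          rw [Finset.mem_image]
          rcases hxs with rfl | rfl | rfl
          · exact ⟨a, by simpa using ha, rfl⟩
          · exact ⟨b, by simpa using hb, rfl⟩
          · exact ⟨c, by simpa using hc, rfl⟩
        have := (Finset.card_le_card hVs).trans Finset.card_image_le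
        rwa [S.cV, Finset.card_range] at this
      obtain rfl : m = n := le_antisymm hmn hnm
      simp only [ne_eq, not_true_eq_false, decide_false, Bool.false_or] at h
      rw [List.any_eq_true] at h
      obtain ⟨c, hc, hma⟩ := h
      unfold matchOk at hma
      simp only [Bool.and_eq_true, decide_eq_true_eq, List.all_eq_true, List.any_eq_true] at hma
      obtain ⟨⟨⟨⟨hlen, hnd⟩, hlt⟩, h1⟩, h2⟩ := hma
      refine ⟨c, hc, hlen, fun _ _ => trivial, prm c.2, f, ?_, ?_, I.inj, ?_⟩
      · intro i hi j hj e
        unfold prm at e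
        rw [List.getD_eq_getElem _ _ (by omega), List.getD_eq_getElem _ _ (by omega)] at e
        exact (List.Nodup.getElem_inj_iff hnd).mp e
      · intro i hi
        unfold prm
        rw [List.getD_eq_getElem _ _ (by omega)]
        exact hlt _ (List.getElem_mem _)
      · intro s
        constructor
        · intro hs
          obtain ⟨a, b, d, hm, rfl⟩ := hcl s hs
          obtain ⟨τ, hτ, hsame⟩ := h2 _ hm
          exact ⟨τ, hτ, (same_im hsame).symm⟩
        · rintro ⟨τ, hτ, rfl⟩
          obtain ⟨⟨a, b, d⟩, hm, hsame⟩ := h1 _ hτ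
          have := same_im (f := f) hsame
          have e : im (f ∘ prm c.2) τ = im f (mapT c.2 τ) := rfl
          rw [e, this]
          exact (I.tri a b d hm).2.2.2

theorem Surf.recog (S : Surf T V n D) (q : ℕ)
    (h : search n D cs q 3 [(0,1,2)] = true) :
    Recog T tetM 4 ∨ Recog T octM 6 ∨ Recog T bipM 7 ∨ Recog T stoM 7 := by
  obtain ⟨s, hs⟩ := S.ex
  obtain ⟨a, b, c, hab, hac, hbc, rfl⟩ := Finset.card_eq_three.mp (S.card s hs)
  let f : ℕ → ℕ := fun i => if i = 0 then a else if i = 1 then b else c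
  have I : Inv T V f 3 [(0,1,2)] := by
    refine ⟨?_, ?_, ?_, by simp⟩
    · intro i hi j hj e
      interval_cases i <;> interval_cases j <;> simp_all [f]
    · intro i hi
      apply S.sub _ hs
      interval_cases i <;> simp [f]
    · intro x y z hx
      simp only [List.mem_singleton, Prod.mk.injEq] at hx
      obtain ⟨rfl, rfl, rfl⟩ := hx
      exact ⟨by omega, by omega, by omega, hs⟩
  obtain ⟨c, hc, hlen, -, p, f, hp, hpn, hf, hT⟩ := search_sound S cs q _ _ _ I h
  have R : Recog T c.1 n := ⟨f ∘ p, fun i hi j hj e => hp i hi j hj (hf _ (hpn i hi) _ (hpn j hj) e), hT⟩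
  have key : ∀ c ∈ cs, (c.1 = tetM ∧ c.2.length = 4) ∨ (c.1 = octM ∧ c.2.length = 6) ∨
      (c.1 = bipM ∧ c.2.length = 7) ∨ (c.1 = stoM ∧ c.2.length = 7) := by decide
  rw [← hlen] at R
  rcases key c hc with ⟨e1, e2⟩ | ⟨e1, e2⟩ | ⟨e1, e2⟩ | ⟨e1, e2⟩ <;> rw [e1, e2] at R <;> tauto


end
section

/-- A complete simplicial fan in coordinates. -/
structure Fan (M : List Tr) (m : ℕ) (A : Fin 3 → ℕ → ℝ) (W : ℝ → ℝ → ℝ → ℕ → ℝ) : Prop where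
  lt : ∀ τ ∈ M, ∀ i ∈ lst τ, i < m
  cont : ∀ i, Continuous fun p : ℝ × ℝ × ℝ => W p.1 p.2.1 p.2.2 i
  nn : ∀ a b c i, 0 ≤ W a b c i
  supp : ∀ a b c, ∃ τ ∈ M, ∀ i, W a b c i ≠ 0 → i ∈ lst τ
  rec0 : ∀ a b c, ∑ i ∈ Finset.range m, W a b c i * A 0 i = a
  rec1 : ∀ a b c, ∑ i ∈ Finset.range m, W a b c i * A 1 i = b
  rec2 : ∀ a b c, ∑ i ∈ Finset.range m, W a b c i * A 2 i = c
  inv : ∀ u : ℕ → ℝ, (∀ i, 0 ≤ u i) → ∀ τ ∈ M, (∀ i, u i ≠ 0 → i ∈ lst τ) →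
    W (∑ i ∈ Finset.range m, u i * A 0 i) (∑ i ∈ Finset.range m, u i * A 1 i)
      (∑ i ∈ Finset.range m, u i * A 2 i) = u

abbrev E3 := EuclideanSpace ℝ (Fin 3)

noncomputable def comb (m : ℕ) (A : Fin 3 → ℕ → ℝ) (u : ℕ → ℝ) : E3 :=
  WithLp.toLp 2 (fun k => ∑ i ∈ Finset.range m, u i * A k i)

section
variable {M : List Tr} {m : ℕ} {A : Fin 3 → ℕ → ℝ} {W : ℝ → ℝ → ℝ → ℕ → ℝ}

theorem comb_smul (c : ℝ) (u : ℕ → ℝ) : comb m A (fun i => c * u i) = c • comb m A u := by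
  ext k
  simp [comb, Finset.mul_sum, mul_assoc]

theorem comb_congr {u u' : ℕ → ℝ} (h : ∀ i < m, u i = u' i) : comb m A u = comb m A u' := by
  ext k
  simp only [comb]
  exact Finset.sum_congr rfl fun i hi => by rw [h i (Finset.mem_range.mp hi)]

/-- The coordinates of a point in the fan. -/
def Wx (W : ℝ → ℝ → ℝ → ℕ → ℝ) (x : E3) : ℕ → ℝ := W (x 0) (x 1) (x 2)

theorem Fan.comb_W (h : Fan M m A W) (x : E3) : comb m A (Wx W x) = x := by
  ext k
  fin_cases k
  · exact h.rec0 _ _ _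
  · exact h.rec1 _ _ _
  · exact h.rec2 _ _ _

theorem Fan.W_comb (h : Fan M m A W) (u : ℕ → ℝ) (h0 : ∀ i, 0 ≤ u i) (τ : Tr) (hτ : τ ∈ M)
    (hs : ∀ i, u i ≠ 0 → i ∈ lst τ) : Wx W (comb m A u) = u := h.inv u h0 τ hτ hs

theorem Fan.cont_W (h : Fan M m A W) (i : ℕ) : Continuous fun x : E3 => Wx W x i := by
  have : Continuous fun x : E3 => ((x 0, x 1, x 2) : ℝ × ℝ × ℝ) := by fun_prop
  exact (h.cont i).comp this

theorem mem_im {g : ℕ → ℕ} {τ : Tr} {x : ℕ} : x ∈ im g τ ↔ ∃ i ∈ lst τ, g i = x := by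
  simp [im, lst, eq_comm]

variable {L : SComplex} {g : ℕ → ℕ}

theorem mem_real (h : Fan M m A W) (hg : ∀ i < m, ∀ j < m, g i = g j → i = j)
    (hL : ∀ s, s ∈ L.faces ↔ s.Nonempty ∧ ∃ τ ∈ M, s ⊆ im g τ) (w : ℕ → ℝ) :
    w ∈ L.realSpace ↔ (∀ v, 0 ≤ w v) ∧ ∃ τ ∈ M, (∀ v, w v ≠ 0 → v ∈ im g τ) ∧
      ∑ i ∈ Finset.range m, w (g i) = 1 := by
  have sums : ∀ s τ, τ ∈ M → s ⊆ im g τ → (∀ v, w v ≠ 0 → v ∈ s) →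
      ∑ v ∈ s, w v = ∑ i ∈ Finset.range m, w (g i) := by
    intro s τ hτ hs hw
    rw [← Finset.sum_image (f := w) (s := Finset.range m) (g := g)]
    · apply Finset.sum_subset
      · intro x hx
        obtain ⟨i, hi, rfl⟩ := mem_im.mp (hs hx)
        exact Finset.mem_image_of_mem _ (Finset.mem_range.mpr (h.lt τ hτ i hi))
      · intro x _ hx
        by_contra hne
        exact hx (hw x hne)
    · intro i hi j hj e
      exact hg i (by simpa using hi) j (by simpa using hj) e
  constructor
  · rintro ⟨h0, s, hs, hw, h1⟩
    obtain ⟨_, τ, hτ, hsτ⟩ := (hL s).mp hs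
    exact ⟨h0, τ, hτ, fun v hv => hsτ (hw v hv), by rw [← sums s τ hτ hsτ hw]; exact h1⟩
  · rintro ⟨h0, τ, hτ, hw, h1⟩
    refine ⟨h0, im g τ, (hL _).mpr ⟨⟨g τ.1, by simp [im]⟩, τ, hτ, subset_rfl⟩, hw, ?_⟩
    rw [sums _ τ hτ subset_rfl hw]; exact h1

/-- Pull back of barycentric coordinates. -/
noncomputable def pull (m : ℕ) (g : ℕ → ℕ) (w : ℕ → ℝ) (i : ℕ) : ℝ := if i < m then w (g i) else 0

/-- Push forward of coordinates. -/
noncomputable def push (m : ℕ) (g : ℕ → ℕ) (u : ℕ → ℝ) (x : ℕ) : ℝ :=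
  ∑ i ∈ Finset.range m, if g i = x then u i else 0

theorem push_apply (hg : ∀ i < m, ∀ j < m, g i = g j → i = j) (u : ℕ → ℝ) {j : ℕ} (hj : j < m) :
    push m g u (g j) = u j := by
  unfold push
  rw [Finset.sum_eq_single j]
  · simp
  · intro i hi hij
    rw [if_neg]
    exact fun e => hij (hg i (Finset.mem_range.mp hi) j hj e)
  · intro hn; exact absurd (Finset.mem_range.mpr hj) hn

theorem push_supp {u : ℕ → ℝ} {x : ℕ} (h : push m g u x ≠ 0) : ∃ i < m, g i = x ∧ u i ≠ 0 := by
  obtain ⟨i, hi, hne⟩ := Finset.exists_ne_zero_of_sum_ne_zero h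
  refine ⟨i, Finset.mem_range.mp hi, ?_⟩
  by_contra hc
  apply hne
  split_ifs with e
  · by_contra hu; exact hc ⟨e, hu⟩
  · rfl

theorem homeo_of_fan (h : Fan M m A W) (hg : ∀ i < m, ∀ j < m, g i = g j → i = j)
    (hL : ∀ s, s ∈ L.faces ↔ s.Nonempty ∧ ∃ τ ∈ M, s ⊆ im g τ) :
    Nonempty (↥(L.realSpace) ≃ₜ ↥(Metric.sphere (0 : EuclideanSpace ℝ (Fin 3)) 1)) := by
  have MR := mem_real (L := L) h hg hL
  -- pulled back coordinates
  have pl : ∀ w ∈ L.realSpace, (∀ i, 0 ≤ pull m g w i) ∧ ∃ τ ∈ M, ∀ i, pull m g w i ≠ 0 → i ∈ lst τ := by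
    intro w hw
    obtain ⟨h0, τ, hτ, hs, _⟩ := (MR w).mp hw
    refine ⟨fun i => ?_, τ, hτ, fun i hi => ?_⟩
    · unfold pull; split_ifs
      · exact h0 _
      · exact le_rfl
    · unfold pull at hi
      split_ifs at hi with him
      · obtain ⟨j, hj, e⟩ := mem_im.mp (hs _ hi)
        rw [← hg j (h.lt τ hτ j hj) i him e]; exact hj
      · exact absurd rfl hi
  have plW : ∀ w ∈ L.realSpace, ∀ c : ℝ, 0 ≤ c →
      Wx W (c • comb m A (pull m g w)) = fun i => c * pull m g w i := by
    intro w hw c hc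
    obtain ⟨h0, τ, hτ, hs⟩ := pl w hw
    rw [← comb_smul]
    exact h.W_comb _ (fun i => mul_nonneg hc (h0 i)) τ hτ (fun i hi => hs i (right_ne_zero_of_mul hi))
  have plsum : ∀ w ∈ L.realSpace, ∑ i ∈ Finset.range m, pull m g w i = 1 := by
    intro w hw
    obtain ⟨_, _, _, _, h1⟩ := (MR w).mp hw
    rw [← h1]
    exact Finset.sum_congr rfl fun i hi => by simp [pull, Finset.mem_range.mp hi]
  have Fne : ∀ w ∈ L.realSpace, comb m A (pull m g w) ≠ 0 := by
    intro w hw e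
    have h1 := plW w hw 1 zero_le_one
    have h2 := plW w hw 0 le_rfl
    rw [e] at h1 h2
    rw [smul_zero] at h1 h2
    have h3 := h1.symm.trans h2
    have := plsum w hw
    have z : ∀ i, pull m g w i = 0 := fun i => by simpa using congrFun h3 i
    simp [z] at this
  have Wpos : ∀ x : E3, x ≠ 0 → 0 < ∑ i ∈ Finset.range m, Wx W x i := by
    intro x hx
    have hnn : ∀ i ∈ Finset.range m, 0 ≤ Wx W x i := fun i _ => h.nn _ _ _ i
    refine lt_of_le_of_ne (Finset.sum_nonneg hnn) fun e => hx ?_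
    have z := (Finset.sum_eq_zero_iff_of_nonneg hnn).mp e.symm
    rw [← h.comb_W x]
    ext k
    simp only [comb]
    exact Finset.sum_eq_zero fun i hi => by rw [z i hi, zero_mul]
  let S : E3 → ℝ := fun x => ∑ i ∈ Finset.range m, Wx W x i
  let G : E3 → ℕ → ℝ := fun x => push m g (fun i => (S x)⁻¹ * Wx W x i)
  let F : (ℕ → ℝ) → E3 := fun w => ‖comb m A (pull m g w)‖⁻¹ • comb m A (pull m g w)
  have FS : ∀ w ∈ L.realSpace, F w ∈ Metric.sphere (0 : E3) 1 := by
    intro w hw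
    rw [mem_sphere_zero_iff_norm]
    exact norm_smul_inv_norm (𝕜 := ℝ) (Fne w hw)
  have sne : ∀ x ∈ Metric.sphere (0 : E3) 1, x ≠ 0 := by
    rintro x hx rfl
    simp at hx
  have GR : ∀ x ∈ Metric.sphere (0 : E3) 1, G x ∈ L.realSpace := by
    intro x hx
    have hp := Wpos x (sne x hx)
    obtain ⟨τ, hτ, hs⟩ := h.supp (x 0) (x 1) (x 2)
    rw [MR]
    refine ⟨fun v => Finset.sum_nonneg fun i _ => ?_, τ, hτ, fun v hv => ?_, ?_⟩
    · split_ifs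
      · exact mul_nonneg (inv_nonneg.mpr hp.le) (h.nn _ _ _ i)
      · exact le_rfl
    · obtain ⟨i, him, e, hi⟩ := push_supp hv
      exact mem_im.mpr ⟨i, hs i (right_ne_zero_of_mul hi), e⟩
    · rw [Finset.sum_congr rfl fun i hi => push_apply hg _ (Finset.mem_range.mp hi), ← Finset.mul_sum]
      exact inv_mul_cancel₀ hp.ne'
  have GF : ∀ w ∈ L.realSpace, G (F w) = w := by
    intro w hw
    set c := ‖comb m A (pull m g w)‖⁻¹ with hc
    have hcp : 0 < c := inv_pos.mpr (norm_pos_iff.mpr (Fne w hw))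
    have e := plW w hw c hcp.le
    have eF : F w = c • comb m A (pull m g w) := rfl
    have eS : S (F w) = c := by
      simp only [S, eF, e]
      rw [← Finset.mul_sum, plsum w hw, mul_one]
    have eu : (fun i => (S (F w))⁻¹ * Wx W (F w) i) = pull m g w := by
      funext i
      rw [eS, eF, e]
      field_simp
    simp only [G]
    rw [eu]
    funext x
    by_cases hx : ∃ i < m, g i = x
    · obtain ⟨i, hi, rfl⟩ := hx
      rw [push_apply hg _ hi]
      simp [pull, hi]
    · have z1 : push m g (pull m g w) x = 0 := by
        by_contra hne
        obtain ⟨i, hi, e, _⟩ := push_supp hne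
        exact hx ⟨i, hi, e⟩
      rw [z1]
      by_contra hne
      obtain ⟨_, τ, hτ, hs, _⟩ := (MR w).mp hw
      obtain ⟨i, hi, e⟩ := mem_im.mp (hs x (Ne.symm hne))
      exact hx ⟨i, h.lt τ hτ i hi, e⟩
  have FG : ∀ x ∈ Metric.sphere (0 : E3) 1, F (G x) = x := by
    intro x hx
    have hp := Wpos x (sne x hx)
    have e : comb m A (pull m g (G x)) = (S x)⁻¹ • x := by
      conv_rhs => rw [← h.comb_W x, ← comb_smul]
      rw [h.comb_W x]
      apply comb_congr
      intro i hi
      simp only [pull, hi, if_true, G]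
      exact push_apply hg _ hi
    have hx1 : ‖x‖ = 1 := mem_sphere_zero_iff_norm.mp hx
    have hSp : 0 < (S x)⁻¹ := inv_pos.mpr hp
    simp only [F]
    rw [e, norm_smul, hx1, Real.norm_of_nonneg hSp.le, mul_one, smul_smul, inv_mul_cancel₀ hSp.ne',
      one_smul]
  have contComb : Continuous fun w : ℕ → ℝ => comb m A (pull m g w) := by
    unfold comb pull
    apply (PiLp.continuous_toLp 2 _).comp
    apply continuous_pi
    intro k
    apply continuous_finsetSum
    intro i _
    split_ifs <;> fun_prop
  refine ⟨⟨⟨fun w => ⟨F w.1, FS w.1 w.2⟩, fun x => ⟨G x.1, GR x.1 x.2⟩, fun w => ?_, fun x => ?_⟩, ?_, ?_⟩⟩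
  · exact Subtype.ext (GF w.1 w.2)
  · exact Subtype.ext (FG x.1 x.2)
  · apply Continuous.subtype_mk
    have c1 : Continuous fun w : ↥(L.realSpace) => comb m A (pull m g w.1) :=
      contComb.comp continuous_subtype_val
    exact (c1.norm.inv₀ fun w => norm_ne_zero_iff.mpr (Fne w.1 w.2)).smul c1
  · apply Continuous.subtype_mk
    apply continuous_pi
    intro v
    simp only [G, push]
    apply continuous_finsetSum
    intro i _
    split_ifs
    · apply Continuous.mul
      · apply Continuous.inv₀
        · simp only [S]
          apply continuous_finsetSum
          intro i _
          exact (h.cont_W i).comp continuous_subtype_val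
        · intro x; exact (Wpos x.1 (sne x.1 x.2)).ne'
      · exact (h.cont_W i).comp continuous_subtype_val
    · exact continuous_const

end

end
section

def octA : Fin 3 → ℕ → ℝ := ![fun i => [1,0,0,-1,0,0,0].getD i 0, fun i => [0,1,0,0,-1,0,0].getD i 0,
  fun i => [0,0,1,0,0,-1,0].getD i 0]
noncomputable def octW (a b c : ℝ) : ℕ → ℝ
  | 0 => max a 0 | 1 => max b 0 | 2 => max c 0
  | 3 => max (-a) 0 | 4 => max (-b) 0 | 5 => max (-c) 0 | _ => 0

def tetA : Fin 3 → ℕ → ℝ := ![fun i => [1,0,0,-1].getD i 0, fun i => [0,1,0,-1].getD i 0,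
  fun i => [0,0,1,-1].getD i 0]
noncomputable def tetW (a b c : ℝ) : ℕ → ℝ
  | 0 => a + max (max 0 (-a)) (max (-b) (-c)) | 1 => b + max (max 0 (-a)) (max (-b) (-c))
  | 2 => c + max (max 0 (-a)) (max (-b) (-c)) | 3 => max (max 0 (-a)) (max (-b) (-c)) | _ => 0

def stoA : Fin 3 → ℕ → ℝ := ![fun i => [1,0,0,-1,0,0,1].getD i 0, fun i => [0,1,0,0,-1,0,1].getD i 0,
  fun i => [0,0,1,0,0,-1,1].getD i 0]
noncomputable def stoW (a b c : ℝ) : ℕ → ℝ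
  | 0 => max a 0 - max 0 (min a (min b c)) | 1 => max b 0 - max 0 (min a (min b c))
  | 2 => max c 0 - max 0 (min a (min b c))
  | 3 => max (-a) 0 | 4 => max (-b) 0 | 5 => max (-c) 0 | 6 => max 0 (min a (min b c)) | _ => 0

def bipA : Fin 3 → ℕ → ℝ := ![fun i => [1,0,-1,-1,0,0,0].getD i 0, fun i => [0,1,0,-1,-1,0,0].getD i 0,
  fun i => [0,0,0,0,0,1,-1].getD i 0]
noncomputable def bipW (a b c : ℝ) : ℕ → ℝ
  | 0 => max a 0 | 1 => max b 0
  | 2 => max (-a) 0 - max 0 (min (-a) (-b)) | 3 => max 0 (min (-a) (-b))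
  | 4 => max (-b) 0 - max 0 (min (-a) (-b)) | 5 => max c 0 | 6 => max (-c) 0 | _ => 0

theorem octFan : Fan octM 6 octA octW := by
  refine ⟨by decide, ?_, ?_, ?_, ?_, ?_, ?_, ?_⟩
  · rintro (_|_|_|_|_|_|i) <;> simp only [octW] <;> fun_prop
  · rintro a b c (_|_|_|_|_|_|i) <;> simp [octW]
  · intro a b c
    rcases le_total a 0 with ha | ha <;> rcases le_total b 0 with hb | hb <;>
      rcases le_total c 0 with hc | hc
    on_goal 1 => refine ⟨(3,4,5), by decide, ?_⟩
    on_goal 2 => refine ⟨(3,4,2), by decide, ?_⟩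
    on_goal 3 => refine ⟨(3,1,5), by decide, ?_⟩
    on_goal 4 => refine ⟨(3,1,2), by decide, ?_⟩
    on_goal 5 => refine ⟨(0,4,5), by decide, ?_⟩
    on_goal 6 => refine ⟨(0,4,2), by decide, ?_⟩
    on_goal 7 => refine ⟨(0,1,5), by decide, ?_⟩
    on_goal 8 => refine ⟨(0,1,2), by decide, ?_⟩
    all_goals
      rintro (_|_|_|_|_|_|i) hi <;> first
        | decide
        | (exfalso; apply hi; simp [octW, ha, hb, hc])
  · intro a b c
    simp only [Finset.sum_range_succ, octA, octW]
    simp [max_def]; split_ifs <;> linarith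
  · intro a b c
    simp only [Finset.sum_range_succ, octA, octW]
    simp [max_def]; split_ifs <;> linarith
  · intro a b c
    simp only [Finset.sum_range_succ, octA, octW]
    simp [max_def]; split_ifs <;> linarith
  · intro u h0 τ hτ hs
    have z : ∀ i, i ∉ lst τ → u i = 0 := fun i hi => by by_contra hne; exact hi (hs i hne)
    have hlt : ∀ τ ∈ octM, ∀ i ∈ lst τ, i < 6 := by decide
    have z7 : ∀ i, 6 ≤ i → u i = 0 := fun i hi => z i (fun h => by have := hlt τ hτ i h; omega)
    have X : ∑ i ∈ Finset.range 6, u i * octA 0 i = u 0 - u 3 := by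
      simp [Finset.sum_range_succ, octA]; ring
    have Y : ∑ i ∈ Finset.range 6, u i * octA 1 i = u 1 - u 4 := by
      simp [Finset.sum_range_succ, octA]; ring
    have Z : ∑ i ∈ Finset.range 6, u i * octA 2 i = u 2 - u 5 := by
      simp [Finset.sum_range_succ, octA]; ring
    rw [X, Y, Z]
    have p0 := h0 0
    have p1 := h0 1
    have p2 := h0 2
    have p3 := h0 3
    have p4 := h0 4
    have p5 := h0 5
    have q : (u 0 = 0 ∨ u 3 = 0) ∧ (u 1 = 0 ∨ u 4 = 0) ∧ (u 2 = 0 ∨ u 5 = 0) := by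
      have : ∀ τ ∈ octM, (0 ∉ lst τ ∨ 3 ∉ lst τ) ∧ (1 ∉ lst τ ∨ 4 ∉ lst τ) ∧ (2 ∉ lst τ ∨ 5 ∉ lst τ) := by
        decide
      obtain ⟨a, b, c⟩ := this τ hτ
      exact ⟨a.imp (z _) (z _), b.imp (z _) (z _), c.imp (z _) (z _)⟩
    obtain ⟨q1, q2, q3⟩ := q
    funext i
    obtain (_|_|_|_|_|_|i) := i
    · rcases q1 with e | e <;> simp [octW, e, p0, p3]
    · rcases q2 with e | e <;> simp [octW, e, p1, p4]
    · rcases q3 with e | e <;> simp [octW, e, p2, p5]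
    · rcases q1 with e | e <;> simp [octW, e, p0, p3]
    · rcases q2 with e | e <;> simp [octW, e, p1, p4]
    · rcases q3 with e | e <;> simp [octW, e, p2, p5]
    · exact (z7 _ (by omega)).symm

theorem tetFan : Fan tetM 4 tetA tetW := by
  refine ⟨by decide, ?_, ?_, ?_, ?_, ?_, ?_, ?_⟩
  · rintro (_|_|_|_|i) <;> simp only [tetW] <;> fun_prop
  · rintro a b c (_|_|_|_|i) <;> simp only [tetW, max_def] <;> (try split_ifs) <;> linarith
  · intro a b c
    have key : tetW a b c 3 = 0 ∨ tetW a b c 0 = 0 ∨ tetW a b c 1 = 0 ∨ tetW a b c 2 = 0 := by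
      simp only [tetW, max_def]
      split_ifs <;> first
        | (left; linarith)
        | (right; left; linarith)
        | (right; right; left; linarith)
        | (right; right; right; linarith)
    rcases key with e | e | e | e
    on_goal 1 => refine ⟨(0,1,2), by decide, ?_⟩
    on_goal 2 => refine ⟨(1,2,3), by decide, ?_⟩
    on_goal 3 => refine ⟨(0,2,3), by decide, ?_⟩
    on_goal 4 => refine ⟨(0,1,3), by decide, ?_⟩
    all_goals
      rintro (_|_|_|_|i) hi <;> first
        | decide
        | exact absurd e hi
        | exact absurd rfl hi
  · intro a b c
    simp [Finset.sum_range_succ, tetA, tetW]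
  · intro a b c
    simp [Finset.sum_range_succ, tetA, tetW]
  · intro a b c
    simp [Finset.sum_range_succ, tetA, tetW]
  · intro u h0 τ hτ hs
    have z : ∀ i, i ∉ lst τ → u i = 0 := fun i hi => by by_contra hne; exact hi (hs i hne)
    have hlt : ∀ τ ∈ tetM, ∀ i ∈ lst τ, i < 4 := by decide
    have z7 : ∀ i, 4 ≤ i → u i = 0 := fun i hi => z i (fun h => by have := hlt τ hτ i h; omega)
    have X : ∑ i ∈ Finset.range 4, u i * tetA 0 i = u 0 - u 3 := by
      simp [Finset.sum_range_succ, tetA]; ring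
    have Y : ∑ i ∈ Finset.range 4, u i * tetA 1 i = u 1 - u 3 := by
      simp [Finset.sum_range_succ, tetA]; ring
    have Z : ∑ i ∈ Finset.range 4, u i * tetA 2 i = u 2 - u 3 := by
      simp [Finset.sum_range_succ, tetA]; ring
    rw [X, Y, Z]
    have p0 := h0 0
    have p1 := h0 1
    have p2 := h0 2
    have p3 := h0 3
    have q : u 0 = 0 ∨ u 1 = 0 ∨ u 2 = 0 ∨ u 3 = 0 := by
      have : ∀ τ ∈ tetM, 0 ∉ lst τ ∨ 1 ∉ lst τ ∨ 2 ∉ lst τ ∨ 3 ∉ lst τ := by decide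
      exact (this τ hτ).imp (z _) (Or.imp (z _) (Or.imp (z _) (z _)))
    have key : max (max 0 (-(u 0 - u 3))) (max (-(u 1 - u 3)) (-(u 2 - u 3))) = u 3 := by
      apply le_antisymm
      · simp only [max_le_iff]; refine ⟨⟨?_, ?_⟩, ?_, ?_⟩ <;> linarith
      · simp only [le_max_iff]
        rcases q with e | e | e | e
        · left; right; linarith
        · right; left; linarith
        · right; right; linarith
        · left; left; linarith
    funext i
    obtain (_|_|_|_|i) := i
    · simp only [tetW, key]; ring
    · simp only [tetW, key]; ring
    · simp only [tetW, key]; ring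
    · simp only [tetW, key]
    · exact (z7 _ (by omega)).symm

theorem stoFan : Fan stoM 7 stoA stoW := by
  refine ⟨by decide, ?_, ?_, ?_, ?_, ?_, ?_, ?_⟩
  · rintro (_|_|_|_|_|_|_|i) <;> simp only [stoW] <;> fun_prop
  · rintro a b c (_|_|_|_|_|_|_|i) <;> simp only [stoW, max_def, min_def] <;> (try split_ifs) <;> linarith
  · intro a b c
    by_cases hp : 0 ≤ a ∧ 0 ≤ b ∧ 0 ≤ c
    · obtain ⟨ha, hb, hc⟩ := hp
      have key : stoW a b c 0 = 0 ∨ stoW a b c 1 = 0 ∨ stoW a b c 2 = 0 := by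
        simp only [stoW, max_eq_left ha, max_eq_left hb, max_eq_left hc,
          max_eq_right (le_min ha (le_min hb hc))]
        rcases min_choice a (min b c) with e | e
        · left; rw [e]; ring
        · rcases min_choice b c with e' | e'
          · right; left; rw [e, e']; ring
          · right; right; rw [e, e']; ring
      rcases key with e | e | e
      on_goal 1 => refine ⟨(1,2,6), by decide, ?_⟩
      on_goal 2 => refine ⟨(0,2,6), by decide, ?_⟩
      on_goal 3 => refine ⟨(0,1,6), by decide, ?_⟩
      all_goals
        rintro (_|_|_|_|_|_|_|i) hi <;> first
          | decide
          | exact absurd e hi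
          | (exfalso; apply hi; simp [stoW, ha, hb, hc])
    · have hm : min a (min b c) ≤ 0 := by
        by_contra hn
        push Not at hn
        simp only [lt_min_iff] at hn
        exact hp ⟨hn.1.le, hn.2.1.le, hn.2.2.le⟩
      have hm' := max_eq_left hm
      rcases le_total a 0 with ha | ha <;> rcases le_total b 0 with hb | hb <;>
        rcases le_total c 0 with hc | hc
      on_goal 1 => refine ⟨(3,4,5), by decide, ?_⟩
      on_goal 2 => refine ⟨(3,4,2), by decide, ?_⟩
      on_goal 3 => refine ⟨(3,1,5), by decide, ?_⟩
      on_goal 4 => refine ⟨(3,1,2), by decide, ?_⟩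
      on_goal 5 => refine ⟨(0,4,5), by decide, ?_⟩
      on_goal 6 => refine ⟨(0,4,2), by decide, ?_⟩
      on_goal 7 => refine ⟨(0,1,5), by decide, ?_⟩
      on_goal 8 => exact absurd ⟨ha, hb, hc⟩ hp
      all_goals
        rintro (_|_|_|_|_|_|_|i) hi <;> first
          | decide
          | (exfalso; apply hi; simp only [stoW, hm']; simp [ha, hb, hc])
          | (exfalso; apply hi; simp only [stoW, hm'])
  · intro a b c
    simp only [Finset.sum_range_succ, stoA, stoW]
    generalize max 0 (min a (min b c)) = m
    simp [max_def]; split_ifs <;> linarith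
  · intro a b c
    simp only [Finset.sum_range_succ, stoA, stoW]
    generalize max 0 (min a (min b c)) = m
    simp [max_def]; split_ifs <;> linarith
  · intro a b c
    simp only [Finset.sum_range_succ, stoA, stoW]
    generalize max 0 (min a (min b c)) = m
    simp [max_def]; split_ifs <;> linarith
  · intro u h0 τ hτ hs
    have z : ∀ i, i ∉ lst τ → u i = 0 := fun i hi => by by_contra hne; exact hi (hs i hne)
    have hlt : ∀ τ ∈ stoM, ∀ i ∈ lst τ, i < 7 := by decide
    have z7 : ∀ i, 7 ≤ i → u i = 0 := fun i hi => z i (fun h => by have := hlt τ hτ i h; omega)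
    have X : ∑ i ∈ Finset.range 7, u i * stoA 0 i = u 0 - u 3 + u 6 := by
      simp [Finset.sum_range_succ, stoA]; ring
    have Y : ∑ i ∈ Finset.range 7, u i * stoA 1 i = u 1 - u 4 + u 6 := by
      simp [Finset.sum_range_succ, stoA]; ring
    have Z : ∑ i ∈ Finset.range 7, u i * stoA 2 i = u 2 - u 5 + u 6 := by
      simp [Finset.sum_range_succ, stoA]; ring
    rw [X, Y, Z]
    have p0 := h0 0
    have p1 := h0 1
    have p2 := h0 2
    have p3 := h0 3
    have p4 := h0 4
    have p5 := h0 5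
    have p6 := h0 6
    have q : (u 0 = 0 ∨ u 3 = 0) ∧ (u 1 = 0 ∨ u 4 = 0) ∧ (u 2 = 0 ∨ u 5 = 0) ∧
        (u 6 = 0 ∨ u 3 = 0) ∧ (u 6 = 0 ∨ u 4 = 0) ∧ (u 6 = 0 ∨ u 5 = 0) ∧
        (u 0 = 0 ∨ u 1 = 0 ∨ u 2 = 0) := by
      have : ∀ τ ∈ stoM, (0 ∉ lst τ ∨ 3 ∉ lst τ) ∧ (1 ∉ lst τ ∨ 4 ∉ lst τ) ∧ (2 ∉ lst τ ∨ 5 ∉ lst τ) ∧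
          (6 ∉ lst τ ∨ 3 ∉ lst τ) ∧ (6 ∉ lst τ ∨ 4 ∉ lst τ) ∧ (6 ∉ lst τ ∨ 5 ∉ lst τ) ∧
          (0 ∉ lst τ ∨ 1 ∉ lst τ ∨ 2 ∉ lst τ) := by
        decide
      obtain ⟨a, b, c, d, e, f, g⟩ := this τ hτ
      exact ⟨a.imp (z _) (z _), b.imp (z _) (z _), c.imp (z _) (z _), d.imp (z _) (z _),
        e.imp (z _) (z _), f.imp (z _) (z _), g.imp (z _) (Or.imp (z _) (z _))⟩
    obtain ⟨q1, q2, q3, q4, q5, q6, q7⟩ := q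
    have key : max 0 (min (u 0 - u 3 + u 6) (min (u 1 - u 4 + u 6) (u 2 - u 5 + u 6))) = u 6 := by
      rcases q4 with e6 | e3
      · rw [e6]
        apply max_eq_left
        simp only [min_le_iff]
        rcases q7 with e | e | e
        · left; linarith
        · right; left; linarith
        · right; right; linarith
      · by_cases e6 : u 6 = 0
        · rw [e6]
          apply max_eq_left
          simp only [min_le_iff]
          rcases q7 with e | e | e
          · left; linarith
          · right; left; linarith
          · right; right; linarith
        · have e4 := q5.resolve_left e6
          have e5 := q6.resolve_left e6
          rw [e3, e4, e5]
          apply le_antisymm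
          · simp only [max_le_iff, min_le_iff]
            refine ⟨p6, ?_⟩
            rcases q7 with e | e | e
            · left; linarith
            · right; left; linarith
            · right; right; linarith
          · apply le_max_of_le_right
            simp only [le_min_iff]
            refine ⟨?_, ?_, ?_⟩ <;> linarith
    have pos : ∀ a b s : ℝ, 0 ≤ a → 0 ≤ b → 0 ≤ s → (a = 0 ∨ b = 0) → (s = 0 ∨ b = 0) →
        max (a - b + s) 0 - s = a ∧ max (-(a - b + s)) 0 = b := by
      intro a b s ha hb hs h1 h2
      by_cases hb0 : b = 0
      · subst hb0
        rw [max_eq_left (by linarith), max_eq_right (by linarith)]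
        constructor <;> ring
      · rw [h1.resolve_right hb0, h2.resolve_right hb0, max_eq_right (by linarith),
          max_eq_left (by linarith)]
        constructor <;> ring
    have r1 := pos _ _ _ p0 p3 p6 q1 q4
    have r2 := pos _ _ _ p1 p4 p6 q2 q5
    have r3 := pos _ _ _ p2 p5 p6 q3 q6
    funext i
    obtain (_|_|_|_|_|_|_|i) := i
    · simp only [stoW, key]; exact r1.1
    · simp only [stoW, key]; exact r2.1
    · simp only [stoW, key]; exact r3.1
    · exact r1.2
    · exact r2.2
    · exact r3.2
    · exact key
    · exact (z7 _ (by omega)).symm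

theorem bipFan : Fan bipM 7 bipA bipW := by
  refine ⟨by decide, ?_, ?_, ?_, ?_, ?_, ?_, ?_⟩
  · rintro (_|_|_|_|_|_|_|i) <;> simp only [bipW] <;> fun_prop
  · rintro a b c (_|_|_|_|_|_|_|i) <;> simp only [bipW, max_def, min_def] <;> (try split_ifs) <;> linarith
  · intro a b c
    obtain ⟨p, hp, hpc⟩ : ∃ p, (p = 5 ∨ p = 6) ∧ ∀ q, (q = 5 ∨ q = 6) → q ≠ p → bipW a b c q = 0 := by
      rcases le_total c 0 with hc | hc
      · refine ⟨6, by simp, ?_⟩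
        rintro q (rfl | rfl) hq
        · simp [bipW, hc]
        · exact absurd rfl hq
      · refine ⟨5, by simp, ?_⟩
        rintro q (rfl | rfl) hq
        · exact absurd rfl hq
        · simp [bipW, hc]
    obtain ⟨i, j, hij, hz⟩ : ∃ i j, ((i = 0 ∧ j = 1) ∨ (i = 1 ∧ j = 2) ∨ (i = 2 ∧ j = 3) ∨
        (i = 3 ∧ j = 4) ∨ (i = 4 ∧ j = 0)) ∧ ∀ q < 5, q ≠ i → q ≠ j → bipW a b c q = 0 := by
      rcases le_total a 0 with ha | ha <;> rcases le_total b 0 with hb | hb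
      · rcases le_total a b with hab | hab
        · refine ⟨2, 3, by simp, ?_⟩
          intro q hq h1 h2
          interval_cases q <;> first
            | exact absurd rfl h1
            | exact absurd rfl h2
            | (simp only [bipW, max_def, min_def]; split_ifs <;> linarith)
        · refine ⟨3, 4, by simp, ?_⟩
          intro q hq h1 h2
          interval_cases q <;> first
            | exact absurd rfl h1
            | exact absurd rfl h2
            | (simp only [bipW, max_def, min_def]; split_ifs <;> linarith)
      · refine ⟨1, 2, by simp, ?_⟩
        intro q hq h1 h2
        interval_cases q <;> first
          | exact absurd rfl h1
          | exact absurd rfl h2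
          | (simp only [bipW, max_def, min_def]; split_ifs <;> linarith)
      · refine ⟨4, 0, by simp, ?_⟩
        intro q hq h1 h2
        interval_cases q <;> first
          | exact absurd rfl h1
          | exact absurd rfl h2
          | (simp only [bipW, max_def, min_def]; split_ifs <;> linarith)
      · refine ⟨0, 1, by simp, ?_⟩
        intro q hq h1 h2
        interval_cases q <;> first
          | exact absurd rfl h1
          | exact absurd rfl h2
          | (simp only [bipW, max_def, min_def]; split_ifs <;> linarith)
    refine ⟨(i, j, p), ?_, ?_⟩
    · rcases hp with rfl | rfl <;>
        rcases hij with ⟨rfl, rfl⟩ | ⟨rfl, rfl⟩ | ⟨rfl, rfl⟩ | ⟨rfl, rfl⟩ | ⟨rfl, rfl⟩ <;> decide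
    · intro q hq
      by_contra hn
      simp only [lst, List.mem_cons, List.not_mem_nil, or_false, not_or] at hn
      apply hq
      by_cases h5 : q < 5
      · exact hz q h5 hn.1 hn.2.1
      · by_cases h7 : q < 7
        · exact hpc q (by omega) hn.2.2
        · obtain ⟨r, rfl⟩ := Nat.exists_eq_add_of_le (Nat.le_of_not_lt h7)
          rw [Nat.add_comm]; rfl
  · intro a b c
    simp only [Finset.sum_range_succ, bipA, bipW]
    generalize max 0 (min (-a) (-b)) = m
    simp [max_def]; split_ifs <;> linarith
  · intro a b c
    simp only [Finset.sum_range_succ, bipA, bipW]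
    generalize max 0 (min (-a) (-b)) = m
    simp [max_def]; split_ifs <;> linarith
  · intro a b c
    simp only [Finset.sum_range_succ, bipA, bipW]
    simp [max_def]; split_ifs <;> linarith
  · intro u h0 τ hτ hs
    have z : ∀ i, i ∉ lst τ → u i = 0 := fun i hi => by by_contra hne; exact hi (hs i hne)
    have hlt : ∀ τ ∈ bipM, ∀ i ∈ lst τ, i < 7 := by decide
    have z7 : ∀ i, 7 ≤ i → u i = 0 := fun i hi => z i (fun h => by have := hlt τ hτ i h; omega)
    have X : ∑ i ∈ Finset.range 7, u i * bipA 0 i = u 0 - u 2 - u 3 := by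
      simp [Finset.sum_range_succ, bipA]; ring
    have Y : ∑ i ∈ Finset.range 7, u i * bipA 1 i = u 1 - u 3 - u 4 := by
      simp [Finset.sum_range_succ, bipA]; ring
    have Z : ∑ i ∈ Finset.range 7, u i * bipA 2 i = u 5 - u 6 := by
      simp [Finset.sum_range_succ, bipA]; ring
    rw [X, Y, Z]
    have p0 := h0 0
    have p1 := h0 1
    have p2 := h0 2
    have p3 := h0 3
    have p4 := h0 4
    have p5 := h0 5
    have p6 := h0 6
    have q : (u 5 = 0 ∨ u 6 = 0) ∧ ((u 2 = 0 ∧ u 3 = 0 ∧ u 4 = 0) ∨ (u 0 = 0 ∧ u 3 = 0 ∧ u 4 = 0) ∨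
        (u 0 = 0 ∧ u 1 = 0 ∧ u 4 = 0) ∨ (u 0 = 0 ∧ u 1 = 0 ∧ u 2 = 0) ∨
        (u 1 = 0 ∧ u 2 = 0 ∧ u 3 = 0)) := by
      have : ∀ τ ∈ bipM, (5 ∉ lst τ ∨ 6 ∉ lst τ) ∧ ((2 ∉ lst τ ∧ 3 ∉ lst τ ∧ 4 ∉ lst τ) ∨
          (0 ∉ lst τ ∧ 3 ∉ lst τ ∧ 4 ∉ lst τ) ∨
          (0 ∉ lst τ ∧ 1 ∉ lst τ ∧ 4 ∉ lst τ) ∨ (0 ∉ lst τ ∧ 1 ∉ lst τ ∧ 2 ∉ lst τ) ∨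
          (1 ∉ lst τ ∧ 2 ∉ lst τ ∧ 3 ∉ lst τ)) := by
        decide
      obtain ⟨a, b⟩ := this τ hτ
      refine ⟨a.imp (z _) (z _), ?_⟩
      have zz : ∀ i j k, (i ∉ lst τ ∧ j ∉ lst τ ∧ k ∉ lst τ) → u i = 0 ∧ u j = 0 ∧ u k = 0 :=
        fun i j k h => ⟨z _ h.1, z _ h.2.1, z _ h.2.2⟩
      exact b.imp (zz _ _ _) (Or.imp (zz _ _ _) (Or.imp (zz _ _ _) (Or.imp (zz _ _ _) (zz _ _ _))))
    obtain ⟨q1, q2⟩ := q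
    funext i
    obtain (_|_|_|_|_|_|_|i) := i
    · rcases q2 with ⟨e, f, g⟩ | ⟨e, f, g⟩ | ⟨e, f, g⟩ | ⟨e, f, g⟩ | ⟨e, f, g⟩ <;>
        simp only [bipW, e, f, g, max_def, min_def] <;> split_ifs <;> linarith
    · rcases q2 with ⟨e, f, g⟩ | ⟨e, f, g⟩ | ⟨e, f, g⟩ | ⟨e, f, g⟩ | ⟨e, f, g⟩ <;>
        simp only [bipW, e, f, g, max_def, min_def] <;> split_ifs <;> linarith
    · rcases q2 with ⟨e, f, g⟩ | ⟨e, f, g⟩ | ⟨e, f, g⟩ | ⟨e, f, g⟩ | ⟨e, f, g⟩ <;>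
        simp only [bipW, e, f, g, max_def, min_def] <;> split_ifs <;> linarith
    · rcases q2 with ⟨e, f, g⟩ | ⟨e, f, g⟩ | ⟨e, f, g⟩ | ⟨e, f, g⟩ | ⟨e, f, g⟩ <;>
        simp only [bipW, e, f, g, max_def, min_def] <;> split_ifs <;> linarith
    · rcases q2 with ⟨e, f, g⟩ | ⟨e, f, g⟩ | ⟨e, f, g⟩ | ⟨e, f, g⟩ | ⟨e, f, g⟩ <;>
        simp only [bipW, e, f, g, max_def, min_def] <;> split_ifs <;> linarith
    · rcases q1 with e | e <;> simp [bipW, e, p5, p6]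
    · rcases q1 with e | e <;> simp [bipW, e, p5, p6]
    · exact (z7 _ (by omega)).symm


end

/-- Triangles of the link of `t`. -/
def TT (K : SComplex) (t : ℕ) (s : Finset ℕ) : Prop := s.card = 3 ∧ t ∉ s ∧ insert t s ∈ K.faces

/-- Vertices of the link of `t`. -/
def VV (K : SComplex) (t : ℕ) : Finset ℕ :=
  K.vertexSet.filter fun x => x ≠ t ∧ ({t, x} : Finset ℕ) ∈ K.faces

section
variable {K : SComplex} {t : ℕ}

theorem mem_vertexSet {x : ℕ} {s : Finset ℕ} (hs : s ∈ K.faces) (hx : x ∈ s) : x ∈ K.vertexSet := by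
  unfold vertexSet
  rw [Finset.mem_sup]
  exact ⟨s, hs, hx⟩

theorem mem_VV {x : ℕ} : x ∈ VV K t ↔ x ≠ t ∧ ({t, x} : Finset ℕ) ∈ K.faces := by
  unfold VV
  rw [Finset.mem_filter]
  exact ⟨fun h => h.2, fun h => ⟨mem_vertexSet h.2 (by simp), h⟩⟩

theorem mem_link {s : Finset ℕ} : s ∈ (K.lk {t}).faces ↔ s.Nonempty ∧ t ∉ s ∧ insert t s ∈ K.faces := by
  simp only [lk, Finset.mem_filter, inter_single]
  have e : s ∪ {t} = insert t s := by ext; simp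
  rw [e]
  constructor
  · rintro ⟨h1, h2, h3⟩
    exact ⟨Finset.nonempty_iff_ne_empty.mpr (fun e => K.not_empty_mem (e ▸ h1)), h2, h3⟩
  · rintro ⟨h1, h2, h3⟩
    exact ⟨mono h3 (Finset.subset_insert _ _) h1, h2, h3⟩

theorem card_VV : (VV K t).card = K.deg {t} := by
  unfold deg fnum
  rw [← Finset.card_image_of_injective (VV K t) (Finset.singleton_injective)]
  congr 1
  ext s
  rw [Finset.mem_image, Finset.mem_filter, mem_link]
  constructor
  · rintro ⟨x, hx, rfl⟩
    obtain ⟨h1, h2⟩ := mem_VV.mp hx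
    exact ⟨⟨by simp, by simp [h1.symm], h2⟩, by simp⟩
  · rintro ⟨⟨_, h1, h2⟩, hc⟩
    obtain ⟨x, rfl⟩ := Finset.card_eq_one.mp hc
    exact ⟨x, mem_VV.mpr ⟨fun e => h1 (by simp [e]), h2⟩, rfl⟩

theorem TT_of_facet {F : Finset ℕ} (hF : F ∈ K.faces) (hc : F.card = 4) (ht : t ∈ F) :
    TT K t (F.erase t) :=
  ⟨by rw [Finset.card_erase_of_mem ht, hc], by simp, by rw [Finset.insert_erase ht]; exact hF⟩

theorem TT_ext (h : NP K) {s : Finset ℕ} (ht : t ∉ s) (hs : insert t s ∈ K.faces) :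
    ∃ r, TT K t r ∧ s ⊆ r := by
  obtain ⟨F, hF, hsF, hc⟩ := h.ext _ hs
  exact ⟨F.erase t, TT_of_facet hF hc (hsF (by simp)),
    Finset.subset_erase.mpr ⟨(Finset.subset_insert _ _).trans hsF, ht⟩⟩

theorem mkSurf (h : NP K) (ht : {t} ∈ K.faces) (D : ℕ)
    (hD : ∀ (x : ℕ) (S : Finset ℕ), S ⊆ (VV K t).erase x → (S.Nonempty → x ∈ VV K t) →
      (∀ y ∈ S, ({t, x, y} : Finset ℕ) ∈ K.faces) → S.card ≤ D) :
    Surf (TT K t) (VV K t) (K.deg {t}) D where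
  ex := by
    obtain ⟨r, hr, _⟩ := TT_ext (t := t) (s := ∅) h (by simp) ht
    exact ⟨r, hr⟩
  card := fun s hs => hs.1
  two := by
    rintro a b c ⟨h1, h2, h3⟩
    have hab : a ≠ b := by
      rintro rfl
      have := Finset.card_le_two (a := a) (b := c)
      simp at h1; omega
    have hac : a ≠ c := by
      rintro rfl
      have := Finset.card_le_two (a := a) (b := b)
      have e : ({a, b, a} : Finset ℕ) = {a, b} := by ext; simp; tauto
      rw [e] at h1; omega
    have hbc : b ≠ c := by
      rintro rfl
      have := Finset.card_le_two (a := a) (b := b)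
      simp at h1; omega
    simp only [Finset.mem_insert, Finset.mem_singleton, not_or] at h2
    obtain ⟨hta, htb, htc⟩ := h2
    have c3 : ({t, a, b} : Finset ℕ).card = 3 := Finset.card_eq_three.mpr ⟨t, a, b, hta, htb, hab, rfl⟩
    have f3 : ({t, a, b} : Finset ℕ) ∈ K.faces := mono h3 (by intro x; simp; tauto) (by simp)
    obtain ⟨x, y, hxy, hx, hy, hz⟩ := h.two _ f3 c3
    have ins : ∀ z, insert z ({t, a, b} : Finset ℕ) = insert t {a, b, z} := by
      intro z; ext; simp; tauto
    have hcn : c ∉ ({t, a, b} : Finset ℕ) := by simp [Ne.symm htc, hac.symm, hbc.symm]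
    have hcx := (hz c hcn).mp (by rw [ins]; exact h3)
    obtain ⟨d, hdc, hd, hdz⟩ : ∃ d, d ≠ c ∧ d ∉ ({t, a, b} : Finset ℕ) ∧
        ∀ z, (z = x ∨ z = y) ↔ (z = c ∨ z = d) := by
      rcases hcx with rfl | rfl
      · exact ⟨y, hxy.symm, hy, fun z => Iff.rfl⟩
      · exact ⟨x, hxy, hx, fun z => or_comm⟩
    refine ⟨d, hdc, ⟨?_, ?_, ?_⟩, ?_⟩
    · simp only [Finset.mem_insert, Finset.mem_singleton, not_or] at hd
      exact Finset.card_eq_three.mpr ⟨a, b, d, hab, Ne.symm hd.2.1, Ne.symm hd.2.2, rfl⟩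
    · simp only [Finset.mem_insert, Finset.mem_singleton, not_or] at hd ⊢
      exact ⟨hta, htb, Ne.symm hd.1⟩
    · rw [← ins]; exact (hz d hd).mpr ((hdz d).mpr (Or.inr rfl))
    · rintro e ⟨e1, e2, e3⟩
      have he : e ∉ ({t, a, b} : Finset ℕ) := by
        simp only [Finset.mem_insert, Finset.mem_singleton, not_or] at e2 ⊢
        refine ⟨Ne.symm e2.2.2, ?_, ?_⟩
        · rintro rfl
          have := Finset.card_le_two (a := e) (b := b)
          have e' : ({e, b, e} : Finset ℕ) = {e, b} := by ext; simp; tauto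
          rw [e'] at e1; omega
        · rintro rfl
          have := Finset.card_le_two (a := a) (b := e)
          simp at e1; omega
      exact (hdz e).mp ((hz e he).mp (by rw [ins]; exact e3))
  conn := by
    rintro S ⟨s, hs, hS⟩ hcl r hr
    have key : ∀ G, Relation.ReflTransGen (SAdj K {t}) (insert t s) G → S (G.erase t) := by
      intro G hG
      induction hG with
      | refl => rw [Finset.erase_insert hs.2.1]; exact hS
      | @tail F G _ hFG ih =>
        obtain ⟨hF, hG, cF, cG, htF, htG, hc⟩ := hFG
        have htF : t ∈ F := htF (by simp)
        have htG : t ∈ G := htG (by simp)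
        have htI : t ∈ F ∩ G := Finset.mem_inter.mpr ⟨htF, htG⟩
        have c2 : ((F ∩ G).erase t).card = 2 := by rw [Finset.card_erase_of_mem htI, hc]
        obtain ⟨a, b, hab, e⟩ := Finset.card_eq_two.mp c2
        have e1 : ∀ H, F ∩ G ⊆ H → t ∈ H → H.card = 4 → ∃ c, H.erase t = {a, b, c} := by
          intro H hH htH cH
          have hs : (F ∩ G).erase t ⊆ H.erase t := Finset.erase_subset_erase _ hH
          obtain ⟨c, _, hc'⟩ := eq_insert_of_card hs (by rw [c2, Finset.card_erase_of_mem htH, cH])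
          refine ⟨c, ?_⟩
          rw [hc', e]; ext; simp; tauto
        obtain ⟨c, e2⟩ := e1 F Finset.inter_subset_left htF cF
        obtain ⟨d, e3⟩ := e1 G Finset.inter_subset_right htG cG
        have T1 := TT_of_facet hF cF htF
        have T2 := TT_of_facet hG cG htG
        rw [e2] at ih T1
        rw [e3] at T2 ⊢
        exact hcl a b c d T1 ih T2
    have := key _ (h.star {t} (Or.inr ht) (by simp) (insert t s) (insert t r) hs.2.2 hr.2.2
      (by rw [Finset.card_insert_of_notMem hs.2.1, hs.1])
      (by rw [Finset.card_insert_of_notMem hr.2.1, hr.1]) (by simp) (by simp))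
    rwa [Finset.erase_insert hr.2.1] at this
  sub := by
    rintro s ⟨h1, h2, h3⟩ x hx
    refine mem_VV.mpr ⟨fun e => h2 (e ▸ hx), mono h3 ?_ (by simp)⟩
    intro y hy
    simp only [Finset.mem_insert, Finset.mem_singleton] at hy ⊢
    rcases hy with rfl | rfl
    · left; rfl
    · right; exact hx
  cover := by
    intro x hx
    obtain ⟨h1, h2⟩ := mem_VV.mp hx
    obtain ⟨r, hr, hs⟩ := TT_ext (t := t) (s := {x}) h (by simp [h1.symm]) h2
    exact ⟨r, hr, hs (by simp)⟩
  cV := card_VV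
  deg := by
    intro x S hS
    have inV : ∀ s, TT K t s → ∀ x ∈ s, x ∈ VV K t := by
      rintro s ⟨h1, h2, h3⟩ x hx
      refine mem_VV.mpr ⟨fun e => h2 (e ▸ hx), mono h3 ?_ (by simp)⟩
      intro y hy
      simp only [Finset.mem_insert, Finset.mem_singleton] at hy ⊢
      rcases hy with rfl | rfl
      · left; rfl
      · right; exact hx
    apply hD x S
    · intro y hy
      obtain ⟨h1, s, hs, hxs, hys⟩ := hS y hy
      exact Finset.mem_erase.mpr ⟨h1, inV s hs y hys⟩
    · rintro ⟨y, hy⟩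
      obtain ⟨h1, s, hs, hxs, hys⟩ := hS y hy
      exact inV s hs x hxs
    · intro y hy
      obtain ⟨h1, s, hs, hxs, hys⟩ := hS y hy
      refine mono hs.2.2 ?_ (by simp)
      intro z hz
      simp only [Finset.mem_insert, Finset.mem_singleton] at hz ⊢
      rcases hz with rfl | rfl | rfl
      · left; rfl
      · right; exact hxs
      · right; exact hys

theorem sphere_of_recog (h : NP K) {M : List Tr} {m : ℕ} {A : Fin 3 → ℕ → ℝ}
    {W : ℝ → ℝ → ℝ → ℕ → ℝ} (hF : Fan M m A W) (hR : Recog (TT K t) M m) : K.HasSphereLink 3 t := by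
  obtain ⟨g, hg, hT⟩ := hR
  apply homeo_of_fan hF hg
  intro s
  rw [mem_link]
  constructor
  · rintro ⟨h1, h2, h3⟩
    obtain ⟨r, hr, hs⟩ := TT_ext h h2 h3
    obtain ⟨τ, hτ, rfl⟩ := (hT r).mp hr
    exact ⟨h1, τ, hτ, hs⟩
  · rintro ⟨h1, τ, hτ, hs⟩
    have hr := (hT (im g τ)).mpr ⟨τ, hτ, rfl⟩
    exact ⟨h1, fun e => hr.2.1 (hs e), mono hr.2.2 (Finset.insert_subset_insert _ hs) (by simp)⟩

theorem lc_of_full (h : NP K) (ht : {t} ∈ K.faces)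
    (hmt : ∀ s : Finset ℕ, s.card = 4 → (∀ t ∈ properFaces s, t ∈ K.faces) → s ∈ K.faces)
    {v : ℕ} (hv : v ∈ VV K t) (full : ∀ y ∈ VV K t, y ≠ v → ({t, v, y} : Finset ℕ) ∈ K.faces)
    (hd : 5 ≤ K.deg {t}) (γ : Finset ℕ) (htγ : t ∉ γ) (hvγ : v ∉ γ) (h1 : insert t γ ∈ K.faces)
    (h2 : insert v γ ∈ K.faces) : insert t (insert v γ) ∈ K.faces := by
  obtain ⟨hvt, htv⟩ := mem_VV.mp hv
  have two : ∀ a b, a ≠ b → t ∉ ({a, b} : Finset ℕ) → v ∉ ({a, b} : Finset ℕ) →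
      insert t {a, b} ∈ K.faces → insert v {a, b} ∈ K.faces → insert t (insert v {a, b}) ∈ K.faces := by
    intro a b hab h1 h2 h3 h4
    simp only [Finset.mem_insert, Finset.mem_singleton, not_or] at h1 h2
    obtain ⟨hta, htb⟩ := h1
    obtain ⟨hva, hvb⟩ := h2
    have fa := full a (mem_VV.mpr ⟨Ne.symm hta, mono h3 (by intro x; simp; tauto) (by simp)⟩) (Ne.symm hva)
    have fb := full b (mem_VV.mpr ⟨Ne.symm htb, mono h3 (by intro x; simp; tauto) (by simp)⟩) (Ne.symm hvb)
    apply hmt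
    · rw [Finset.card_insert_of_notMem (by simp [hta, htb, Ne.symm hvt]),
        Finset.card_insert_of_notMem (by simp [hva, hvb]), Finset.card_pair hab]
    · intro u hu
      unfold properFaces at hu
      rw [Finset.mem_filter, Finset.mem_powerset] at hu
      obtain ⟨hus, hne, hneq⟩ := hu
      have hne := Finset.nonempty_iff_ne_empty.mpr hne
      obtain ⟨x, hx, hxu⟩ := Finset.exists_of_ssubset (Finset.ssubset_iff_subset_ne.mpr ⟨hus, hneq⟩)
      have hsub : ∀ y ∈ u, (y = t ∨ y = v ∨ y = a ∨ y = b) ∧ y ≠ x := fun y hy =>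
        ⟨by simpa using hus hy, fun e => hxu (e ▸ hy)⟩
      simp only [Finset.mem_insert, Finset.mem_singleton] at hx
      rcases hx with rfl | rfl | rfl | rfl
      · refine mono h4 (fun y hy => ?_) hne
        have := hsub y hy; simp; tauto
      · refine mono h3 (fun y hy => ?_) hne
        have := hsub y hy; simp; tauto
      · refine mono fb (fun y hy => ?_) hne
        have := hsub y hy; simp; tauto
      · refine mono fa (fun y hy => ?_) hne
        have := hsub y hy; simp; tauto
  have hc := h.le _ h1
  rw [Finset.card_insert_of_notMem htγ] at hc
  obtain hc | hc | hc | hc : γ.card = 0 ∨ γ.card = 1 ∨ γ.card = 2 ∨ γ.card = 3 := by omega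
  · rw [Finset.card_eq_zero] at hc
    subst hc; exact htv
  · obtain ⟨y, rfl⟩ := Finset.card_eq_one.mp hc
    simp only [Finset.mem_singleton] at htγ hvγ
    exact full y (mem_VV.mpr ⟨Ne.symm htγ, h1⟩) (Ne.symm hvγ)
  · obtain ⟨a, b, hab, rfl⟩ := Finset.card_eq_two.mp hc
    exact two a b hab htγ hvγ h1 h2
  · exfalso
    have S : Surf (TT K t) (VV K t) (K.deg {t}) (K.deg {t}) := by
      apply mkSurf h ht
      intro x S hS _ _
      rw [← card_VV]
      exact Finset.card_le_card (hS.trans (Finset.erase_subset _ _))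
    have cP : (insert v γ).card = 4 := by rw [Finset.card_insert_of_notMem hvγ, hc]
    have htP : t ∉ insert v γ := by simp [htγ, Ne.symm hvt]
    -- every triple of `insert v γ` is a triangle
    have all : ∀ p ∈ insert v γ, TT K t ((insert v γ).erase p) := by
      intro p hp
      refine ⟨by rw [Finset.card_erase_of_mem hp, cP], fun e => htP (Finset.mem_of_mem_erase e), ?_⟩
      by_cases hpv : p = v
      · subst hpv
        rw [Finset.erase_insert hvγ]; exact h1
      · have hpγ : p ∈ γ := (Finset.mem_insert.mp hp).resolve_left hpv
        rw [Finset.erase_insert_of_ne (Ne.symm hpv)]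
        have c2 : (γ.erase p).card = 2 := by rw [Finset.card_erase_of_mem hpγ, hc]
        obtain ⟨a, b, hab, e⟩ := Finset.card_eq_two.mp c2
        have hsub : ({a, b} : Finset ℕ) ⊆ γ := by rw [← e]; exact Finset.erase_subset _ _
        rw [e]
        exact two a b hab (fun h => htγ (hsub h)) (fun h => hvγ (hsub h))
          (mono h1 (Finset.insert_subset_insert _ hsub) (by simp))
          (mono h2 (Finset.insert_subset_insert _ hsub) (by simp))
    have cl : ∀ s, TT K t s → s ⊆ insert v γ := by
      apply S.conn
      · exact ⟨_, all v (by simp), Finset.erase_subset _ _⟩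
      · intro x y z d hT hs hTd
        obtain ⟨e, he, hP⟩ := eq_insert_of_card hs (by rw [cP, hT.1])
        obtain ⟨n1, n2, n3⟩ := S.ne (s := ∅) hT
        have hT2 : TT K t {x, y, e} := by
          have := all z (by rw [hP]; simp)
          have e' : (insert v γ).erase z = {x, y, e} := by
            rw [hP]
            ext q
            simp only [Finset.mem_erase, Finset.mem_insert, Finset.mem_singleton] at he ⊢
            push Not at he
            constructor
            · tauto
            · rintro (rfl | rfl | rfl)
              · exact ⟨n2, by tauto⟩
              · exact ⟨n3, by tauto⟩
              · exact ⟨he.2.2, by tauto⟩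
          rwa [e'] at this
        obtain ⟨d0, hd0, _, hall⟩ := S.two _ _ _ hT
        have hez : e ≠ z := by
          rintro rfl; apply he; simp
        have he0 := (hall e hT2).resolve_left hez
        have hdP : d ∈ insert v γ := by
          rcases hall d hTd with rfl | rfl
          · exact hs (by simp)
          · rw [hP, ← he0]; simp
        intro q hq
        simp only [Finset.mem_insert, Finset.mem_singleton] at hq
        rcases hq with rfl | rfl | rfl
        · exact hs (by simp)
        · exact hs (by simp)
        · exact hdP
    have : VV K t ⊆ insert v γ := by
      intro x hx
      obtain ⟨s, hs, hxs⟩ := S.cover x hx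
      exact cl s hs hxs
    have := Finset.card_le_card this
    rw [card_VV, cP] at this
    omega

theorem surf_sphere (h : NP K) (ht : {t} ∈ K.faces) (hn : K.deg {t} ≤ 7)
    (nf : 5 ≤ K.deg {t} → ∀ v ∈ VV K t, ∃ y ∈ VV K t, y ≠ v ∧ ({t, v, y} : Finset ℕ) ∉ K.faces) :
    K.HasSphereLink 3 t := by
  have fin : (Recog (TT K t) tetM 4 ∨ Recog (TT K t) octM 6 ∨ Recog (TT K t) bipM 7 ∨
      Recog (TT K t) stoM 7) → K.HasSphereLink 3 t := by
    rintro (r | r | r | r)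
    · exact sphere_of_recog h tetFan r
    · exact sphere_of_recog h octFan r
    · exact sphere_of_recog h bipFan r
    · exact sphere_of_recog h stoFan r
  apply fin
  by_cases h5 : 5 ≤ K.deg {t}
  · have S : Surf (TT K t) (VV K t) (K.deg {t}) (K.deg {t} - 2) := by
      apply mkSurf h ht
      intro x S hS hx hK
      by_cases hne : S.Nonempty
      · obtain ⟨y, hy, hyx, hyK⟩ := nf h5 x (hx hne)
        have hsub : S ⊆ ((VV K t).erase x).erase y :=
          Finset.subset_erase.mpr ⟨hS, fun hyS => hyK (hK y hyS)⟩
        have := Finset.card_le_card hsub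
        rw [Finset.card_erase_of_mem (Finset.mem_erase.mpr ⟨hyx, hy⟩),
          Finset.card_erase_of_mem (hx hne), card_VV] at this
        omega
      · rw [Finset.not_nonempty_iff_eq_empty.mp hne]; simp
    obtain e | e | e : K.deg {t} = 5 ∨ K.deg {t} = 6 ∨ K.deg {t} = 7 := by omega
    · rw [e] at S; exact S.recog 40 search5
    · rw [e] at S; exact S.recog 40 search6
    · rw [e] at S; exact S.recog 40 search7
  · have S : Surf (TT K t) (VV K t) (K.deg {t}) 3 := by
      apply mkSurf h ht
      intro x S hS hx hK
      by_cases hne : S.Nonempty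
      · have := Finset.card_le_card hS
        rw [Finset.card_erase_of_mem (hx hne), card_VV] at this
        omega
      · rw [Finset.not_nonempty_iff_eq_empty.mp hne]; simp
    obtain ⟨s, hs⟩ := S.ex
    have := Finset.card_le_card (S.sub s hs)
    rw [card_VV, hs.1] at this
    obtain e | e : K.deg {t} = 3 ∨ K.deg {t} = 4 := by omega
    · rw [e] at S; exact S.recog 40 search3
    · rw [e] at S; exact S.recog 40 search4

end

/-- Lemma 3.9: in the class `R` with exactly one singular vertex `t`, `d(t) ≥ 8`. -/
theorem statement8 (K : SComplex) (t : ℕ) (hK : InClassR K)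
    (hsing : {v | K.IsSingular v} = {t}) :
    8 ≤ K.deg {t} := by
  have hs : K.IsSingular t := by
    have : t ∈ {v | K.IsSingular v} := by rw [hsing]; rfl
    exact this
  obtain ⟨ht, hns⟩ := hs
  obtain ⟨hnp, -, -, hmt, hred⟩ := hK
  have h := NP.of hnp
  by_contra hlt
  apply hns
  apply surf_sphere h ht (by omega)
  intro h5 v hv
  by_contra hc
  push Not at hc
  obtain ⟨hvt, htv⟩ := mem_VV.mp hv
  obtain ⟨w, hw⟩ := Infinite.exists_notMem_finset K.vertexSet
  have C : Ctr K t v w := ⟨h, Ne.symm hvt, fun s hs hws => hw (mem_vertexSet hs hws), htv,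
    lc_of_full h ht hmt hv hc h5⟩
  have g := con_g2 C (fun x hx hxv hxK =>
    mono (hc x (mem_VV.mpr ⟨hx, hxK⟩) hxv) (by intro y; simp; tauto) (by simp)) h5
  have := hred _ (con_np C).to (Or.inr (Or.inl (con_contraction C)))
  omega

end SComplex
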